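/- arXiv:1408.3801 — 4 statements merged into one kernel-verified Lean document; each statement's English description precedes it below -/
import Mathlib

section
/- Suppose X is a Polish space, T : X → X is a Borel function, and B ⊆ X is a Borel set on which the tail equivalence relation E_t(T) has all classes countable (i.e., for every x ∈ B, {y ∈ B : x E_t(T) y} is countable). Then A = ⋃_{n ∈ ℕ} T^n(B) is a Borel T-stable set (T(A) ⊆ A) containing B on which E_t(T) still has all classes countable. -/
open Set

/-!
The only hard point is that each `T^[n] '' B` is Borel. By hypothesis `T^[n]` is countable-to-one on
`B`, so this is the Lusin–Novikov theorem: a countable-to-one Borel function on a standard Borel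
space is injective on each member of some countable Borel cover, and injective Borel images are
Borel.

For Lusin–Novikov, make the function `f` continuous and suppose that the space is not covered by
countably many Borel sets on which `f` is injective; call a set small if it is so covered. Consider
finite families of open sets which, after removing any small set, are all met by a single fiber
of `f`. Any member of such a family can be split into two disjoint sets of small diameter: otherwise
countably many small sets witness the failure of all basic splittings, and off their union the
relevant part of the member is an analytic set on which `f` is injective, hence small by Lusin
separation. Iterating yields a Cantor scheme whose `n`-th level is met by one fiber. The values of
these fibers converge, and the fiber over the limit contains a Cantor set, so it is uncountable.
-/

open MeasureTheory MeasurableSpace TopologicalSpace Filter Topology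
open scoped ENNReal

namespace LusinNovikov

section AnalyticSets

variable {Z Y : Type*} [TopologicalSpace Z]

lemma analyticSet_inter [T2Space Z] {s t : Set Z} (hs : AnalyticSet s) (ht : AnalyticSet t) :
    AnalyticSet (s ∩ t) := by
  rw [inter_eq_iInter]
  exact AnalyticSet.iInter fun b ↦ by cases b <;> assumption

variable [PolishSpace Z] [MeasurableSpace Z] [BorelSpace Z]
  [TopologicalSpace Y] [T2Space Y] [MeasurableSpace Y] [BorelSpace Y] {f : Z → Y} {A : Set Z}

lemma measurablySeparable_image_inter_diff (hf : Continuous f) (hA : AnalyticSet A)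
    (hinj : InjOn f A) {U : Set Z} (hU : MeasurableSet U) :
    MeasurablySeparable (f '' (A ∩ U)) (f '' (A \ U)) :=
  ((analyticSet_inter hA hU.analyticSet).image_of_continuous hf).measurablySeparable
    ((analyticSet_inter hA hU.compl.analyticSet).image_of_continuous hf)
    ((disjoint_sdiff_right.mono_left inter_subset_right).image hinj inter_subset_left sdiff_subset)

lemma exists_measurableSet_injOn_of_analyticSet (hf : Continuous f) (hA : AnalyticSet A)
    (hinj : InjOn f A) : ∃ C, MeasurableSet C ∧ A ⊆ C ∧ InjOn f C := by
  have hbasis (U : countableBasis Z) : MeasurableSet (U : Set Z) :=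
    (isOpen_of_mem_countableBasis U.2).measurableSet
  choose E hAE hEd hE using fun U : countableBasis Z ↦
    measurablySeparable_image_inter_diff hf hA hinj (hbasis U)
  -- On `C`, membership in a basic open set depends only on the value of `f`.
  refine ⟨⋂ U : countableBasis Z, {x | x ∈ (U : Set Z) ↔ f x ∈ E U}, ?_, ?_, ?_⟩
  · have := (countable_countableBasis Z).to_subtype
    exact .iInter fun U ↦ (hbasis U).iff (hf.measurable (hE U))
  · refine fun x hx ↦ mem_iInter.2 fun U ↦ ⟨fun hxU ↦ hAE U ⟨x, ⟨hx, hxU⟩, rfl⟩, fun hfx ↦ ?_⟩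
    by_contra hxU
    exact disjoint_left.1 (hEd U) ⟨x, ⟨hx, hxU⟩, rfl⟩ hfx
  · intro x hx y hy hxy
    by_contra hne
    obtain ⟨U, hU, hxU, hyU⟩ :=
      (isBasis_countableBasis Z).exists_subset_of_mem_open (mem_compl_singleton_iff.2 hne)
        isOpen_compl_singleton
    have hfx : f x ∈ E ⟨U, hU⟩ := (mem_iInter.1 hx ⟨U, hU⟩).1 hxU
    exact hyU ((mem_iInter.1 hy ⟨U, hU⟩).2 (hxy ▸ hfx)) rfl

end AnalyticSets

section ThickFamilies

variable {Z Y : Type*} [MeasurableSpace Z] {f : Z → Y}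

/-- The filter dual to the σ-ideal of *small* sets, those covered by countably many measurable sets
on which `f` is injective. -/
def coInjOn (f : Z → Y) : Filter Z :=
  countableGenerate {s | MeasurableSet s ∧ InjOn f sᶜ}

instance : CountableInterFilter (coInjOn f) :=
  inferInstanceAs (CountableInterFilter (countableGenerate _))

lemma compl_mem_coInjOn {C : Set Z} (hC : MeasurableSet C) (hinj : InjOn f C) :
    Cᶜ ∈ coInjOn f :=
  .basic ⟨hC.compl, by rwa [compl_compl]⟩

lemma exists_measurableSet_mem_coInjOn {D : Set Z} (hD : D ∈ coInjOn f) :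
    ∃ E ∈ coInjOn f, MeasurableSet E ∧ E ⊆ D := by
  obtain ⟨S, hS, hSc, hSD⟩ := mem_countableGenerate_iff.1 hD
  exact ⟨⋂₀ S, mem_countableGenerate_iff.2 ⟨S, hS, hSc, Subset.rfl⟩,
    .sInter hSc fun s hs ↦ (hS hs).1, hSD⟩

lemma exists_countable_cover_of_coInjOn_eq_bot (h : coInjOn f = ⊥) :
    ∃ 𝒞 : Set (Set Z), 𝒞.Countable ∧ (∀ C ∈ 𝒞, MeasurableSet C ∧ InjOn f C) ∧ ⋃₀ 𝒞 = univ := by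
  obtain ⟨S, hS, hSc, hSe⟩ := mem_countableGenerate_iff.1 (empty_mem_iff_bot.2 h)
  refine ⟨compl '' S, hSc.image _, ?_, ?_⟩
  · rintro _ ⟨s, hs, rfl⟩
    exact ⟨(hS hs).1.compl, (hS hs).2⟩
  · rw [← compl_sInter, subset_empty_iff.1 hSe, compl_empty]

/-- A family of sets is thick for `f` if, after removing any small set, some single fiber of `f`
still meets all members of the family. -/
def IsThick (f : Z → Y) (𝒰 : Set (Set Z)) : Prop :=
  ∀ D ∈ coInjOn f, ∃ y, ∀ U ∈ 𝒰, y ∈ f '' (U ∩ D)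

lemma IsThick.mono {𝒰 𝒱 : Set (Set Z)} (h : IsThick f 𝒱) (h𝒰 : 𝒰 ⊆ 𝒱) : IsThick f 𝒰 :=
  fun D hD ↦ (h D hD).imp fun _ hy U hU ↦ hy U (h𝒰 hU)

lemma IsThick.exists_mem_image {𝒰 : Set (Set Z)} (h : IsThick f 𝒰) : ∃ y, ∀ U ∈ 𝒰, y ∈ f '' U := by
  simpa only [inter_univ] using h univ univ_mem

lemma isThick_singleton_univ [(coInjOn f).NeBot] : IsThick f {univ} := by
  intro D hD
  obtain ⟨x, hx⟩ := Filter.nonempty_of_mem hD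
  exact ⟨f x, by rintro _ rfl; exact ⟨x, ⟨mem_univ x, hx⟩, rfl⟩⟩

lemma IsThick.exists_ne_map_eq [TopologicalSpace Z] [PolishSpace Z] [BorelSpace Z]
    [TopologicalSpace Y] [T2Space Y] [MeasurableSpace Y] [BorelSpace Y] (hf : Continuous f)
    {𝒰 : Set (Set Z)} (h : IsThick f 𝒰) (hc : 𝒰.Countable) (hm : ∀ U ∈ 𝒰, MeasurableSet U)
    {U D : Set Z} (hU : U ∈ 𝒰) (hD : D ∈ coInjOn f) :
    ∃ x ∈ U ∩ D, ∃ x' ∈ U ∩ D, x ≠ x' ∧ f x = f x' ∧ ∀ W ∈ 𝒰, f x ∈ f '' (W ∩ D) := by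
  obtain ⟨E, hE, hEm, hED⟩ := exists_measurableSet_mem_coInjOn hD
  let A : Set Z := (U ∩ E) ∩ ⋂ W : 𝒰, f ⁻¹' (f '' (W ∩ E))
  have hA : AnalyticSet A := by
    have : Countable 𝒰 := hc.to_subtype
    have : Nonempty 𝒰 := ⟨⟨U, hU⟩⟩
    refine analyticSet_inter ((hm U hU).inter hEm).analyticSet (.iInter fun W ↦ ?_)
    exact (((hm W W.2).inter hEm).analyticSet.image_of_continuous hf).preimage hf
  have hinj : ¬ InjOn f A := by
    intro hinj
    obtain ⟨C, hC, hAC, hCinj⟩ := exists_measurableSet_injOn_of_analyticSet hf hA hinj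
    obtain ⟨y, hy⟩ := h _ (inter_mem hE (compl_mem_coInjOn hC hCinj))
    obtain ⟨x, ⟨hxU, hxE, hxC⟩, rfl⟩ := hy U hU
    refine hxC (hAC ⟨⟨hxU, hxE⟩, mem_iInter.2 fun W ↦ ?_⟩)
    exact image_mono (inter_subset_inter_right _ inter_subset_left) (hy W W.2)
  simp only [InjOn, not_forall] at hinj
  obtain ⟨x, hx, x', hx', hxx', hne⟩ := hinj
  have hsub (W : Set Z) : W ∩ E ⊆ W ∩ D := inter_subset_inter_right W hED
  exact ⟨x, hsub U hx.1, x', hsub U hx'.1, hne, hxx',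
    fun W hW ↦ image_mono (hsub W) (mem_iInter.1 hx.2 ⟨W, hW⟩)⟩

end ThickFamilies

section Splitting

/-- `V` is a pair of disjoint open sets of diameter at most `ε` whose closures lie in `U`: the
children of `U` in a Cantor scheme. -/
structure IsSplitting {Z : Type*} [PseudoMetricSpace Z] (ε : ℝ≥0∞) (U : Set Z) (V : Bool → Set Z) :
    Prop where
  isOpen : ∀ b, IsOpen (V b)
  closure_subset : ∀ b, closure (V b) ⊆ U
  ediam_le : ∀ b, Metric.ediam (V b) ≤ ε
  disjoint : Pairwise fun a b ↦ Disjoint (V a) (V b)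

lemma exists_mem_countableBasis_closure_subset_ediam_le {Z : Type*} [PseudoMetricSpace Z]
    [SecondCountableTopology Z] {ε : ℝ≥0∞} (hε : 0 < ε) {O : Set Z} {x : Z} (hO : O ∈ 𝓝 x) :
    ∃ V ∈ countableBasis Z, x ∈ V ∧ closure V ⊆ O ∧ Metric.ediam V ≤ ε := by
  obtain ⟨K, hK, hKc, hKO⟩ := exists_mem_nhds_isClosed_subset hO
  obtain ⟨V, hV, hxV, hVs⟩ := (isBasis_countableBasis Z).mem_nhds_iff.1
    (inter_mem hK (Metric.eball_mem_nhds x (ENNReal.half_pos hε.ne')))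
  refine ⟨V, hV, hxV, (closure_minimal (hVs.trans inter_subset_left) hKc).trans hKO, ?_⟩
  calc Metric.ediam V ≤ Metric.ediam (Metric.eball x (ε / 2)) :=
        Metric.ediam_mono (hVs.trans inter_subset_right)
    _ ≤ 2 * (ε / 2) := Metric.ediam_eball_le
    _ = ε := ENNReal.mul_div_cancel two_ne_zero ENNReal.ofNat_ne_top

variable {Z : Type*} [MetricSpace Z] [SecondCountableTopology Z] {ε : ℝ≥0∞}

lemma exists_isSplitting_of_ne (hε : 0 < ε) {U : Set Z} (hU : IsOpen U) {x : Bool → Z}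
    (hxU : ∀ b, x b ∈ U) (hne : x false ≠ x true) :
    ∃ V : Bool → countableBasis Z, IsSplitting ε U (fun b ↦ V b) ∧ ∀ b, x b ∈ (V b : Set Z) := by
  have hinj : Function.Injective x := Bool.injective_iff.2 hne
  obtain ⟨O, hO, hdisj⟩ := (finite_range x).t2_separation
  choose V hV hxV hVO hVε using fun b ↦ exists_mem_countableBasis_closure_subset_ediam_le hε
    ((hU.inter (hO (x b)).2).mem_nhds ⟨hxU b, (hO (x b)).1⟩)
  have hVsub (b : Bool) : V b ⊆ O (x b) := (subset_closure.trans (hVO b)).trans inter_subset_right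
  exact ⟨fun b ↦ ⟨V b, hV b⟩,
    { isOpen := fun b ↦ isOpen_of_mem_countableBasis (hV b)
      closure_subset := fun b ↦ (hVO b).trans inter_subset_left
      ediam_le := hVε
      disjoint := fun a b hab ↦ (hdisj (mem_range_self a) (mem_range_self b) (hinj.ne hab)).mono
        (hVsub a) (hVsub b) }, hxV⟩

variable [CompleteSpace Z] [MeasurableSpace Z] [BorelSpace Z]
  {Y : Type*} [TopologicalSpace Y] [T2Space Y] [MeasurableSpace Y] [BorelSpace Y] {f : Z → Y}
  {𝒰 : Set (Set Z)}

lemma IsThick.exists_isSplitting (hf : Continuous f) (h : IsThick f 𝒰) (hc : 𝒰.Countable)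
    (ho : ∀ U ∈ 𝒰, IsOpen U) {U : Set Z} (hU : U ∈ 𝒰) (hε : 0 < ε) :
    ∃ V, IsSplitting ε U V ∧ IsThick f (𝒰 ∪ range V) := by
  by_contra! hthin
  have hex (V : Bool → countableBasis Z) : ∃ D ∈ coInjOn f, IsSplitting ε U (fun b ↦ V b) →
      ∀ y, ∃ W ∈ 𝒰 ∪ range (fun b ↦ (V b : Set Z)), y ∉ f '' (W ∩ D) := by
    by_cases hV : IsSplitting ε U (fun b ↦ V b)
    · have hVthin := hthin _ hV
      simp only [IsThick, not_forall, not_exists] at hVthin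
      obtain ⟨D, hD, hDV⟩ := hVthin
      exact ⟨D, hD, fun _ y ↦ by simpa using hDV y⟩
    · exact ⟨univ, univ_mem, fun hV' ↦ absurd hV' hV⟩
  choose D hD hDthin using hex
  have := (countable_countableBasis Z).to_subtype
  obtain ⟨x, hx, x', hx', hne, hxx', hmeet⟩ :=
    h.exists_ne_map_eq hf hc (fun W hW ↦ (ho W hW).measurableSet) hU (countable_iInter_mem.2 hD)
  obtain ⟨V, hV, hxV⟩ := exists_isSplitting_of_ne (x := fun b ↦ bif b then x' else x) hε (ho U hU)
    (Bool.forall_bool.2 ⟨hx.1, hx'.1⟩) hne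
  obtain ⟨W, hW, hxW⟩ := hDthin V hV (f x)
  refine hxW (image_mono (inter_subset_inter_right W (iInter_subset D V)) ?_)
  rcases hW with hW | ⟨_ | _, rfl⟩
  · exact hmeet W hW
  · exact ⟨x, ⟨hxV false, hx.2⟩, rfl⟩
  · exact ⟨x', ⟨hxV true, hx'.2⟩, hxx'.symm⟩

lemma IsThick.exists_refinement (hf : Continuous f) (h : IsThick f 𝒰) (hfin : 𝒰.Finite)
    (ho : ∀ U ∈ 𝒰, IsOpen U) (hε : 0 < ε) :
    ∃ 𝒱 : Set (Set Z), (𝒱.Finite ∧ (∀ V ∈ 𝒱, IsOpen V) ∧ IsThick f 𝒱) ∧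
      ∀ U ∈ 𝒰, ∃ V : Bool → Set Z, (∀ b, V b ∈ 𝒱) ∧ IsSplitting ε U V := by
  suffices H : ∀ ℛ ⊆ 𝒰, ∃ 𝒱 : Set (Set Z), 𝒰 ⊆ 𝒱 ∧
      (𝒱.Finite ∧ (∀ V ∈ 𝒱, IsOpen V) ∧ IsThick f 𝒱) ∧
      ∀ U ∈ ℛ, ∃ V : Bool → Set Z, (∀ b, V b ∈ 𝒱) ∧ IsSplitting ε U V from
    (H 𝒰 Subset.rfl).imp fun _ h𝒱 ↦ h𝒱.2
  intro ℛ hℛ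
  induction ℛ, hfin.subset hℛ using Set.Finite.induction_on with
  | empty => exact ⟨𝒰, Subset.rfl, ⟨hfin, ho, h⟩, by simp⟩
  | @insert U ℛ _ _ ih =>
    obtain ⟨𝒱, h𝒰𝒱, ⟨h𝒱fin, h𝒱o, h𝒱⟩, hsplit⟩ := ih ((subset_insert _ _).trans hℛ)
    obtain ⟨V, hV, h𝒱V⟩ :=
      h𝒱.exists_isSplitting hf h𝒱fin.countable h𝒱o (h𝒰𝒱 (hℛ (mem_insert _ _))) hε
    refine ⟨𝒱 ∪ range V, h𝒰𝒱.trans subset_union_left, ⟨h𝒱fin.union (finite_range V), ?_, h𝒱V⟩, ?_⟩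
    · rintro _ (hW | ⟨b, rfl⟩)
      exacts [h𝒱o _ hW, hV.isOpen b]
    · rintro _ (rfl | hW)
      · exact ⟨V, fun b ↦ .inr (mem_range_self b), hV⟩
      · obtain ⟨V', hV'𝒱, hV'⟩ := hsplit _ hW
        exact ⟨V', fun b ↦ .inl (hV'𝒱 b), hV'⟩

end Splitting

section Schemes

lemma exists_scheme_of_forall_exists_children {α β : Type*} {F : ℕ → Set α}
    {P : ℕ → α → (β → α) → Prop} (h₀ : (F 0).Nonempty)
    (h : ∀ n, ∀ a ∈ F n, ∃ v : β → α, (∀ b, v b ∈ F (n + 1)) ∧ P n a v) :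
    ∃ A : List β → α, (∀ l, A l ∈ F l.length) ∧ ∀ l, P l.length (A l) fun b ↦ A (b :: l) := by
  choose v hvF hvP using h
  obtain ⟨a₀, ha₀⟩ := h₀
  let A : (l : List β) → F l.length :=
    List.rec ⟨a₀, ha₀⟩ fun b l a ↦ ⟨v l.length a a.2 b, hvF l.length a a.2 b⟩
  exact ⟨fun l ↦ (A l).1, fun l ↦ (A l).2, fun l ↦ hvP l.length (A l).1 (A l).2⟩

variable {Z Y β : Type*}

lemma vanishingDiam_of_ediam_cons_le [PseudoMetricSpace Z] {A : List β → Set Z} {ε : ℕ → ℝ≥0∞}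
    (hε : Tendsto ε atTop (𝓝 0)) (hA : ∀ l b, Metric.ediam (A (b :: l)) ≤ ε l.length) :
    CantorScheme.VanishingDiam A := by
  intro x
  rw [← tendsto_add_atTop_iff_nat 1]
  refine tendsto_of_tendsto_of_tendsto_of_le_of_le tendsto_const_nhds hε (fun _ ↦ zero_le)
    fun n ↦ ?_
  simpa only [PiNat.res_succ, PiNat.res_length] using hA (PiNat.res x n) (x n)

/-- The common values of `f` on the levels of the scheme converge to its value along any branch. -/
lemma exists_injective_of_scheme [PseudoMetricSpace Z] [CompleteSpace Z] [TopologicalSpace Y]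
    [T2Space Y] {f : Z → Y} (hf : Continuous f) {A : List β → Set Z}
    (hanti : CantorScheme.ClosureAntitone A) (hdisj : CantorScheme.Disjoint A)
    (hdiam : CantorScheme.VanishingDiam A)
    (hlevel : ∀ n, ∃ y, ∀ l : List β, l.length = n → y ∈ f '' A l) :
    ∃ φ : (ℕ → β) → Z, Function.Injective φ ∧ ∀ x x', f (φ x) = f (φ x') := by
  choose y hy using hlevel
  have hne (l : List β) : (A l).Nonempty := (hy _ l rfl).imp fun _ h ↦ h.1
  have hdom := hanti.map_of_vanishingDiam hdiam hne
  let φ (x : ℕ → β) : Z := (CantorScheme.inducedMap A).2 ⟨x, hdom ▸ mem_univ x⟩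
  have hlim (x : ℕ → β) : Tendsto y atTop (𝓝 (f (φ x))) := by
    choose u hu huy using fun n ↦ hy n (PiNat.res x n) (PiNat.res_length x n)
    have hu_lim : Tendsto u atTop (𝓝 (φ x)) := by
      rw [tendsto_iff_edist_tendsto_0]
      exact tendsto_of_tendsto_of_tendsto_of_le_of_le tendsto_const_nhds (hdiam x)
        (fun _ ↦ zero_le) fun n ↦ Metric.edist_le_ediam_of_mem (hu n) (CantorScheme.map_mem _ n)
    exact ((hf.tendsto (φ x)).comp hu_lim).congr huy
  exact ⟨φ, fun x x' hxx' ↦ congrArg Subtype.val (hdisj.map_injective hxx'),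
    fun x x' ↦ tendsto_nhds_unique (hlim x) (hlim x')⟩

end Schemes

section CountableFibers

variable {Z Y : Type*} [MetricSpace Z] [CompleteSpace Z] [SecondCountableTopology Z]
  [MeasurableSpace Z] [BorelSpace Z] [TopologicalSpace Y] [T2Space Y] [MeasurableSpace Y]
  [BorelSpace Y] {f : Z → Y}

lemma exists_scheme_isThick (hf : Continuous f) [(coInjOn f).NeBot] {ε : ℕ → ℝ≥0∞}
    (hε : ∀ n, 0 < ε n) :
    ∃ A : List Bool → Set Z, (∀ n, IsThick f (A '' {l | l.length = n})) ∧
      ∀ l, IsSplitting (ε l.length) (A l) fun b ↦ A (b :: l) := by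
  let 𝔉 := {𝒰 : Set (Set Z) // 𝒰.Finite ∧ (∀ U ∈ 𝒰, IsOpen U) ∧ IsThick f 𝒰}
  choose next hnext hsplit using fun (n : ℕ) (𝒰 : 𝔉) ↦
    𝒰.2.2.2.exists_refinement hf 𝒰.2.1 𝒰.2.2.1 (hε n)
  let F : ℕ → 𝔉 := fun n ↦ Nat.rec
    ⟨{univ}, finite_singleton _, by simp, isThick_singleton_univ⟩
    (fun n 𝒰 ↦ ⟨next n 𝒰, hnext n 𝒰⟩) n
  obtain ⟨A, hAF, hA⟩ := exists_scheme_of_forall_exists_children (F := fun n ↦ (F n).1)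
    (singleton_nonempty univ) fun n ↦ hsplit n (F n)
  refine ⟨A, fun n ↦ (F n).2.2.2.mono ?_, hA⟩
  rintro _ ⟨l, rfl, rfl⟩
  exact hAF l

lemma coInjOn_eq_bot_of_continuous (hf : Continuous f) (hc : ∀ y, (f ⁻¹' {y}).Countable) :
    coInjOn f = ⊥ := by
  by_contra hbot
  have : (coInjOn f).NeBot := ⟨hbot⟩
  obtain ⟨A, hthick, hA⟩ := exists_scheme_isThick hf (ε := fun n ↦ (n : ℝ≥0∞)⁻¹)
    fun n ↦ ENNReal.inv_pos.2 (ENNReal.natCast_ne_top n)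
  obtain ⟨φ, hφ, hfφ⟩ := exists_injective_of_scheme hf (fun l ↦ (hA l).closure_subset)
    (fun l ↦ (hA l).disjoint)
    (vanishingDiam_of_ediam_cons_le ENNReal.tendsto_inv_nat_nhds_zero fun l ↦ (hA l).ediam_le)
    fun n ↦ (hthick n).exists_mem_image.imp fun y hy l hl ↦ hy _ ⟨l, hl, rfl⟩
  have hrange : (range φ).Countable := by
    refine (hc (f (φ fun _ ↦ true))).mono ?_
    rintro _ ⟨x, rfl⟩
    exact hfφ x _
  have := hrange.to_subtype
  have : Uncountable (ℕ → Bool) :=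
    Cardinal.aleph0_lt_mk_iff.1 (by simpa using Cardinal.aleph0_lt_continuum)
  exact not_countable ((rangeFactorization_injective.2 hφ).countable)

end CountableFibers

variable {X Y : Type*} [MeasurableSpace X] [MeasurableSpace Y] {f : X → Y}

lemma exists_polishSpace_continuous [StandardBorelSpace X] [TopologicalSpace Y]
    [SecondCountableTopology Y] [OpensMeasurableSpace Y] (hf : Measurable f) :
    ∃ t : TopologicalSpace X, PolishSpace X ∧ BorelSpace X ∧ Continuous f := by
  obtain ⟨t, hborel, hpolish⟩ := ‹StandardBorelSpace X›.polish
  obtain ⟨t', ht't, hf', hpolish'⟩ := hf.exists_continuous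
  have hborel' := hborel.measurable_eq.trans (borel_eq_borel_of_le hpolish' hpolish ht't).symm
  exact ⟨t', hpolish', ⟨hborel'⟩, hf'⟩

variable [CountablySeparated Y]

lemma exists_countable_cover_injOn_of_countable_fibers [StandardBorelSpace X] (hf : Measurable f)
    (hc : ∀ y, (f ⁻¹' {y}).Countable) :
    ∃ 𝒞 : Set (Set X), 𝒞.Countable ∧ (∀ C ∈ 𝒞, MeasurableSet C ∧ InjOn f C) ∧ ⋃₀ 𝒞 = univ := by
  obtain ⟨g, hg, hginj⟩ := measurable_injection_nat_bool_of_countablySeparated Y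
  obtain ⟨t, hpolish, hborel, hcont⟩ := exists_polishSpace_continuous (hg.comp hf)
  have hgc (z : ℕ → Bool) : (g ∘ f ⁻¹' {z}).Countable := by
    rcases (g ∘ f ⁻¹' {z}).eq_empty_or_nonempty with hempty | ⟨x, hx⟩
    · exact hempty ▸ countable_empty
    · exact (hc (f x)).mono fun x' hx' ↦ hginj (Eq.trans hx' (Eq.symm hx))
  let := upgradeIsCompletelyMetrizable X
  obtain ⟨𝒞, h𝒞c, h𝒞, hcover⟩ :=
    exists_countable_cover_of_coInjOn_eq_bot (coInjOn_eq_bot_of_continuous hcont hgc)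
  exact ⟨𝒞, h𝒞c, fun C hC ↦ ⟨(h𝒞 C hC).1, fun x hx y hy hxy ↦
    (h𝒞 C hC).2 hx hy (congrArg g hxy)⟩, hcover⟩

lemma measurableSet_range_of_countable_fibers [StandardBorelSpace X] (hf : Measurable f)
    (hc : ∀ y, (f ⁻¹' {y}).Countable) : MeasurableSet (range f) := by
  obtain ⟨𝒞, h𝒞c, h𝒞, hcover⟩ := exists_countable_cover_injOn_of_countable_fibers hf hc
  rw [← image_univ, ← hcover, image_sUnion]
  exact .sUnion (h𝒞c.image _) <| forall_mem_image.2 fun C hC ↦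
    (h𝒞 C hC).1.image_of_measurable_injOn hf (h𝒞 C hC).2

lemma measurableSet_image_of_countable_fibers {B : Set X} [StandardBorelSpace B]
    (hf : Measurable f) (hc : ∀ y, (B ∩ f ⁻¹' {y}).Countable) : MeasurableSet (f '' B) := by
  rw [image_eq_range]
  refine measurableSet_range_of_countable_fibers (hf.comp measurable_subtype_coe) fun y ↦ ?_
  refine ((hc y).preimage Subtype.val_injective).mono ?_
  exact fun x hx ↦ ⟨x.2, hx⟩

end LusinNovikov

section TailEquivalence

variable {X : Type*} {T : X → X} {B : Set X}

/-- The tail equivalence relation `E_t(T)`: the forward orbits of `x` and `y` eventually coincide,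
up to a shift of time. -/
def TailEquiv (T : X → X) (x y : X) : Prop :=
  ∃ m n : ℕ, T^[m] x = T^[n] y

lemma TailEquiv.of_iterate {j k : ℕ} {x y : X} (h : TailEquiv T (T^[j] x) (T^[k] y)) :
    TailEquiv T x y := by
  obtain ⟨m, n, hmn⟩ := h
  exact ⟨m + j, n + k, by simpa only [Function.iterate_add_apply] using hmn⟩

lemma subset_iUnion_iterate_image : B ⊆ ⋃ n : ℕ, T^[n] '' B :=
  fun x hx ↦ mem_iUnion.2 ⟨0, x, hx, rfl⟩

lemma mapsTo_iUnion_iterate_image : MapsTo T (⋃ n : ℕ, T^[n] '' B) (⋃ n : ℕ, T^[n] '' B) := by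
  intro x hx
  obtain ⟨n, b, hb, rfl⟩ := mem_iUnion.1 hx
  exact mem_iUnion.2 ⟨n + 1, b, hb, Function.iterate_succ_apply' T n b⟩

lemma countable_tailEquiv_iUnion_iterate_image
    (hcount : ∀ x ∈ B, {y ∈ B | TailEquiv T x y}.Countable) {x : X}
    (hx : x ∈ ⋃ n : ℕ, T^[n] '' B) :
    {y ∈ ⋃ n : ℕ, T^[n] '' B | TailEquiv T x y}.Countable := by
  obtain ⟨j, b, hb, rfl⟩ := mem_iUnion.1 hx
  refine (countable_iUnion fun k : ℕ ↦ (hcount b hb).image T^[k]).mono ?_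
  rintro y ⟨hy, hby⟩
  obtain ⟨k, c, hc, rfl⟩ := mem_iUnion.1 hy
  exact mem_iUnion.2 ⟨k, c, ⟨hc, hby.of_iterate⟩, rfl⟩

lemma countable_inter_iterate_preimage_singleton
    (hcount : ∀ x ∈ B, {y ∈ B | TailEquiv T x y}.Countable) (n : ℕ) (y : X) :
    (B ∩ T^[n] ⁻¹' {y}).Countable := by
  rcases (B ∩ T^[n] ⁻¹' {y}).eq_empty_or_nonempty with hempty | ⟨x, hxB, hxy⟩
  · exact hempty ▸ countable_empty
  · refine (hcount x hxB).mono ?_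
    rintro z ⟨hzB, hzy⟩
    exact ⟨hzB, n, n, hxy.trans hzy.symm⟩

end TailEquivalence

theorem statement11_general {X : Type*} [MeasurableSpace X] [CountablySeparated X]
    {T : X → X} (hT : Measurable T) {B : Set X} [StandardBorelSpace B]
    (hcount : ∀ x ∈ B, {y ∈ B | TailEquiv T x y}.Countable) :
    MeasurableSet (⋃ n : ℕ, T^[n] '' B) ∧
    B ⊆ ⋃ n : ℕ, T^[n] '' B ∧
    MapsTo T (⋃ n : ℕ, T^[n] '' B) (⋃ n : ℕ, T^[n] '' B) ∧
    ∀ x ∈ ⋃ n : ℕ, T^[n] '' B, {y ∈ ⋃ n : ℕ, T^[n] '' B | TailEquiv T x y}.Countable :=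
  ⟨.iUnion fun n ↦ LusinNovikov.measurableSet_image_of_countable_fibers (hT.iterate n)
      (countable_inter_iterate_preimage_singleton hcount n),
    subset_iUnion_iterate_image, mapsTo_iUnion_iterate_image,
    fun _ ↦ countable_tailEquiv_iUnion_iterate_image hcount⟩

/-- If tail equivalence of a Borel `T` has countable classes on a Borel
set `B`, then `A = ⋃ n, T^n(B)` is a Borel `T`-stable set containing `B` on which
tail equivalence still has countable classes. -/
theorem statement11 {X : Type*} [TopologicalSpace X] [PolishSpace X]
    [MeasurableSpace X] [BorelSpace X]
    (T : X → X) (hT : Measurable T) (B : Set X) (hB : MeasurableSet B)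
    (hcount : ∀ x ∈ B, {y ∈ B | ∃ m n : ℕ, T^[m] x = T^[n] y}.Countable) :
    MeasurableSet (⋃ n : ℕ, T^[n] '' B) ∧
    B ⊆ ⋃ n : ℕ, T^[n] '' B ∧
    (∀ x ∈ ⋃ n : ℕ, T^[n] '' B, T x ∈ ⋃ n : ℕ, T^[n] '' B) ∧
    ∀ x ∈ ⋃ n : ℕ, T^[n] '' B,
      {y ∈ ⋃ n : ℕ, T^[n] '' B | ∃ m n : ℕ, T^[m] x = T^[n] y}.Countable := by
  have := hB.standardBorel
  exact statement11_general hT hcount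
end

section
/- Suppose X and Y are Polish spaces, E is a Borel equivalence relation on X, F is an equivalence relation on a subset of Y with all classes countable, and π : X → Y is a Borel reduction of E to F. Then there is an equivalence relation F' on all of Y, Borel as a subset of Y × Y and with all classes countable, such that π is also a reduction of E to F'. -/
open Set

/-!
If a Borel set `R ⊆ Y × Z` is the image of a standard Borel space and has countable sections, it
has a Borel cover with countable sections. Otherwise one grows a Cantor scheme in the source,
keeping at every level the whole finite family of images uncoverable in the sense of `IsThin`.
In the limit the first coordinates of all branches agree, since a family two of whose members lie
over disjoint Borel sets is thin, while the second coordinates are pairwise distinct: so some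
section of `R` contains a copy of the Cantor set.

Applied to the image of `E` under `π × π`, and intersected with a Borel set separating that image
from the image of the complement of `E`, this gives a Borel relation `T` with countable sections
that agrees with `E` on the range of `π`. There `T` is transitive, and since the range is analytic,
separation yields a Borel set containing it on which `T` is still transitive; outside this set the
required relation is equality. This works when `Y` is standard Borel; in general one pulls the
relation back along a Borel injection of `Y` into `2^ℕ`.
-/

namespace CountableReduction

open MeasureTheory MeasurableSpace Metric Filter PiNat
open scoped ENNReal Topology

theorem exists_forall_not_countable_inter {Z : Type*} {v : Z → ℕ → Bool}
    (hv : Function.Injective v) {S : Set Z} (hS : ¬ S.Countable) :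
    ∃ k, ∀ b, ¬ (S ∩ {z | v z k = b}).Countable := by
  by_contra! h
  choose b hb using h
  have hexc : (v ⁻¹' {fun k => !b k}).Subsingleton := subsingleton_singleton.preimage hv
  refine hS (((countable_iUnion hb).union hexc.countable).mono fun z hz => ?_)
  by_cases hzb : ∃ k, v z k = b k
  · obtain ⟨k, hk⟩ := hzb
    exact Or.inl (mem_iUnion.2 ⟨k, hz, hk⟩)
  · exact Or.inr (funext fun k => Bool.eq_not.2 (not_exists.1 hzb k))

section Thin

variable {Y Z I J : Type*} [MeasurableSpace Y] [MeasurableSpace Z]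

/-- A family of subsets of `Y × Z` is thin if its members have Borel covers such that every point
of `Y` has a countable section in at least one of the covers. For a single set this means having a
Borel cover with countable sections; families are needed because the covers of the members of a
Cantor scheme have to be found simultaneously. -/
def IsThin (A : I → Set (Y × Z)) : Prop :=
  ∃ B : I → Set (Y × Z), (∀ i, MeasurableSet (B i)) ∧ (∀ i, A i ⊆ B i) ∧
    ∀ y, ∃ i, (Prod.mk y ⁻¹' B i).Countable

theorem IsThin.mono {A A' : I → Set (Y × Z)} (hA' : IsThin A') (h : ∀ i, A i ⊆ A' i) :
    IsThin A :=
  let ⟨B, hBm, hAB, hB⟩ := hA'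
  ⟨B, hBm, fun i => (h i).trans (hAB i), hB⟩

theorem IsThin.exists_measurableSet_of_const [Countable I] {A : Set (Y × Z)}
    (hA : IsThin fun _ : I => A) :
    ∃ B, MeasurableSet B ∧ A ⊆ B ∧ ∀ y, (Prod.mk y ⁻¹' B).Countable := by
  obtain ⟨B, hBm, hAB, hB⟩ := hA
  refine ⟨⋂ i, B i, .iInter hBm, subset_iInter hAB, fun y => ?_⟩
  obtain ⟨i, hi⟩ := hB y
  exact hi.mono (preimage_mono (iInter_subset B i))

theorem isThin_of_disjoint_fst {A : I → Set (Y × Z)} {U V : Set Y} (hU : MeasurableSet U)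
    (hV : MeasurableSet V) (hUV : Disjoint U V) {i j : I} (hi : A i ⊆ Prod.fst ⁻¹' U)
    (hj : A j ⊆ Prod.fst ⁻¹' V) : IsThin A := by
  refine ⟨fun l => {q | (l = i → q.1 ∈ U) ∧ (l = j → q.1 ∈ V)}, fun l => ?_, ?_, fun y => ?_⟩
  · exact ((MeasurableSet.const _).imp (measurable_fst hU)).inter
      ((MeasurableSet.const _).imp (measurable_fst hV))
  · rintro l q hq
    exact ⟨fun h => hi (h ▸ hq), fun h => hj (h ▸ hq)⟩
  · by_cases hy : y ∈ U
    · exact ⟨j, countable_empty.mono fun z hz => hUV.notMem_of_mem_left hy (hz.2 rfl)⟩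
    · exact ⟨i, countable_empty.mono fun z hz => hy (hz.1 rfl)⟩

theorem isThin_of_eq_empty {A : I → Set (Y × Z)} {i : I} (hi : A i = ∅) : IsThin A :=
  isThin_of_disjoint_fst .empty .empty (disjoint_empty ∅) (i := i) (j := i) (by simp [hi])
    (by simp [hi])

theorem IsThin.iUnion [Finite I] [Countable J] {A : I → J → Set (Y × Z)}
    (hA : ∀ m : I → J, IsThin fun i => A i (m i)) : IsThin fun i => ⋃ n, A i n := by
  choose B hBm hAB hB using hA
  refine ⟨fun i => ⋃ n, ⋂ m : I → J, ⋂ _ : m i = n, B m i, fun i => ?_, fun i => ?_, fun y => ?_⟩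
  · exact .iUnion fun n => .iInter fun m => .iInter fun _ => hBm m i
  · refine iUnion_mono fun n => subset_iInter₂ fun m hm => ?_
    exact hm ▸ hAB m i
  · by_contra! hy
    have uncountable_piece (i) :
        ∃ n, ¬ (Prod.mk y ⁻¹' ⋂ m : I → J, ⋂ _ : m i = n, B m i).Countable := by
      by_contra! hc
      exact hy i (by simpa only [preimage_iUnion] using countable_iUnion hc)
    choose m hm using uncountable_piece
    obtain ⟨i, hi⟩ := hB m y
    exact hm i (hi.mono (preimage_mono (iInter₂_subset (s := fun m' _ => B m' i) m rfl)))

theorem isThin_of_forall_coordinate_inter [Finite I] [Countable J] {v : Z → ℕ → Bool}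
    (hvm : Measurable v) (hv : Function.Injective v) {A : I → Set (Y × Z)} (p : J → I)
    (β : J → Bool)
    (hA : ∀ k : I → ℕ, IsThin fun j => A (p j) ∩ {q | v q.2 (k (p j)) = β j}) : IsThin A := by
  choose B hBm hAB hB using hA
  refine ⟨fun i => ⋂ k : I → ℕ, ⋂ j, ⋂ _ : p j = i, {q | v q.2 (k i) = β j}ᶜ ∪ B k j,
    fun i => ?_, fun i => ?_, fun y => ?_⟩
  · refine .iInter fun k => .iInter fun j => .iInter fun _ => .union (.compl ?_) (hBm k j)
    exact (by fun_prop : Measurable fun q : Y × Z => v q.2 (k i)) (measurableSet_singleton (β j))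
  · refine subset_iInter fun k => subset_iInter₂ fun j hj q hq => ?_
    subst hj
    exact or_iff_not_imp_left.2 fun h => hAB k j ⟨hq, not_not.1 h⟩
  · by_contra! hy
    choose k hk using fun i => exists_forall_not_countable_inter hv (hy i)
    obtain ⟨j, hj⟩ := hB k y
    refine hk (p j) (β j) (hj.mono fun z ⟨hz, hzβ⟩ => ?_)
    simp only [mem_preimage, mem_iInter] at hz
    exact (hz k j rfl).resolve_left (not_not.2 hzβ)

end Thin

theorem exists_isClosed_cover_ediam_le {P : Type*} [PseudoEMetricSpace P]
    [TopologicalSpace.SeparableSpace P] {ε : ℝ≥0∞} (hε : ε ≠ 0) : ∃ D : Set (Set P), D.Countable ∧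
      (∀ d ∈ D, IsClosed d ∧ ediam d ≤ ε) ∧ ⋃₀ D = univ := by
  obtain ⟨s, hs, hsd⟩ := TopologicalSpace.exists_countable_dense P
  refine ⟨(closedEBall · (ε / 2)) '' s, hs.image _, ?_, eq_univ_of_forall fun x => ?_⟩
  · rintro _ ⟨c, -, rfl⟩
    exact ⟨isClosed_closedEBall,
      ediam_closedEBall_le.trans_eq (ENNReal.mul_div_cancel (by simp) (by simp))⟩
  · obtain ⟨c, hc, hxc⟩ := EMetric.mem_closure_iff.1 (hsd x) (ε / 2) (ENNReal.half_pos hε)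
    exact ⟨_, mem_image_of_mem _ hc, hxc.le⟩

theorem eventually_res_subset_of_mem_nhds {P : Type*} [PseudoMetricSpace P] {A : List Bool → Set P}
    (hA : CantorScheme.Antitone A) (hdiam : CantorScheme.VanishingDiam A) {α : ℕ → Bool} {x : P}
    (hx : ∀ n, x ∈ A (res α n)) {U : Set P} (hU : U ∈ 𝓝 x) : ∀ᶠ n in atTop, A (res α n) ⊆ U := by
  obtain ⟨ε, hε, hεU⟩ := Metric.mem_nhds_iff.1 hU
  obtain ⟨N, hN⟩ := hdiam.dist_lt ε hε α
  have hres : Antitone fun n => A (res α n) := antitone_nat_of_succ_le fun n => hA _ _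
  filter_upwards [eventually_ge_atTop N] with n hn y hy
  exact hεU (hN y (hres hn hy) x (hx N))

theorem injective_snd_of_forall_mem_res {P Y Z : Type*} {f : P → Y × Z}
    {v : Z → ℕ → Bool} {A : List Bool → Set P}
    (hA : ∀ l, ∃ k, ∀ b, ∀ x ∈ A (b :: l), v (f x).2 k = b)
    {x : (ℕ → Bool) → P} (hx : ∀ α n, x α ∈ A (res α n)) :
    Function.Injective fun α => (f (x α)).2 := by
  intro α β (hαβ : (f (x α)).2 = (f (x β)).2)
  refine res_injective (funext fun n => ?_)
  induction n with
  | zero => rfl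
  | succ n ih =>
    obtain ⟨k, hk⟩ := hA (res α n)
    have hα : v (f (x α)).2 k = α n := hk _ _ (hx α (n + 1))
    have hβ : v (f (x β)).2 k = β n := hk _ _ (ih ▸ hx β (n + 1))
    rw [res_succ, res_succ, ih, ← hα, ← hβ, hαβ]

section Scheme

variable {P Y Z : Type*} [MeasurableSpace Y] [MeasurableSpace Z] {f : P → Y × Z}
  {u : Y → ℕ → Bool} {v : Z → ℕ → Bool}

theorem exists_refinement_not_isThin {I J : Type*} [Finite I] [Finite J] [PseudoEMetricSpace P]
    [TopologicalSpace.SeparableSpace P] (hvm : Measurable v) (hv : Function.Injective v)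
    (hvf : Continuous fun x => v (f x).2) {W : I → Set P} (hWc : ∀ i, IsClosed (W i))
    (hW : ¬ IsThin fun i => f '' W i) (p : J → I) (β : J → Bool) {ε : ℝ≥0∞} (hε : ε ≠ 0) :
    ∃ W' : J → Set P, (∀ j, IsClosed (W' j)) ∧ (¬ IsThin fun j => f '' W' j) ∧
      (∀ j, W' j ⊆ W (p j)) ∧ (∀ j, ediam (W' j) ≤ ε) ∧
      ∃ k : I → ℕ, ∀ j, ∀ x ∈ W' j, v (f x).2 (k (p j)) = β j := by
  obtain ⟨D, hD, hDc, hDuniv⟩ := exists_isClosed_cover_ediam_le (P := P) hε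
  have := hD.to_subtype
  obtain ⟨k, hk⟩ := not_forall.1 (mt (isThin_of_forall_coordinate_inter hvm hv p β) hW)
  let V (j : J) : Set P := W (p j) ∩ {x | v (f x).2 (k (p j)) = β j}
  have hVD (j) : f '' W (p j) ∩ {q | v q.2 (k (p j)) = β j} ⊆ ⋃ d : D, f '' (V j ∩ d) := by
    rintro _ ⟨⟨x, hx, rfl⟩, hxβ⟩
    obtain ⟨d, hd, hxd⟩ := hDuniv.ge (mem_univ x)
    exact mem_iUnion.2 ⟨⟨d, hd⟩, mem_image_of_mem f ⟨⟨hx, hxβ⟩, hxd⟩⟩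
  obtain ⟨d, hd⟩ := not_forall.1 (mt IsThin.iUnion fun h => hk (h.mono hVD))
  refine ⟨fun j => V j ∩ d j, fun j => ?_, hd, fun j x hx => hx.1.1,
    fun j => (ediam_mono inter_subset_right).trans (hDc _ (d j).2).2, k, fun j x hx => hx.1.2⟩
  have hclosed : IsClosed {x | v (f x).2 (k (p j)) = β j} :=
    isClosed_eq ((continuous_apply _).comp hvf) continuous_const
  exact ((hWc _).inter hclosed).inter (hDc _ (d j).2).1

theorem exists_cantorScheme_not_isThin [PseudoMetricSpace P] [TopologicalSpace.SeparableSpace P]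
    (hvm : Measurable v) (hv : Function.Injective v) (hvf : Continuous fun x => v (f x).2)
    (hf : ¬ ∃ B, MeasurableSet B ∧ range f ⊆ B ∧ ∀ y, (Prod.mk y ⁻¹' B).Countable) :
    ∃ A : List Bool → Set P, CantorScheme.ClosureAntitone A ∧ CantorScheme.VanishingDiam A ∧
      (∀ n, ¬ IsThin fun t : List.Vector Bool n => f '' A t.toList) ∧
      ∀ l, ∃ k, ∀ b, ∀ x ∈ A (b :: l), v (f x).2 k = b := by
  let Level (n : ℕ) := {W : List.Vector Bool n → Set P //
    (∀ t, IsClosed (W t)) ∧ ¬ IsThin fun t => f '' W t}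
  let root : Level 0 := ⟨fun _ => univ, fun _ => isClosed_univ, fun h =>
    hf (by simpa only [image_univ] using h.exists_measurableSet_of_const)⟩
  have exists_next (n : ℕ) (W : Level n) : ∃ W' : Level (n + 1),
      (∀ t, W'.1 t ⊆ W.1 t.tail) ∧ (∀ t, ediam (W'.1 t) ≤ ((n + 1 : ℕ) : ℝ≥0∞)⁻¹) ∧
      ∃ k : List.Vector Bool n → ℕ, ∀ t, ∀ x ∈ W'.1 t, v (f x).2 (k t.tail) = t.head := by
    obtain ⟨W', hc, hthick, h⟩ := exists_refinement_not_isThin hvm hv hvf W.2.1 W.2.2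
      (fun t : List.Vector Bool (n + 1) => t.tail) (fun t => t.head)
      (ENNReal.inv_ne_zero.2 (ENNReal.natCast_ne_top (n + 1)))
    exact ⟨⟨W', hc, hthick⟩, h⟩
  choose next hsub hdiam k hk using exists_next
  let W (n : ℕ) : Level n := Nat.rec root next n
  let A (l : List Bool) : Set P := (W l.length).1 ⟨l, rfl⟩
  have hA (n) : (fun t : List.Vector Bool n => A t.toList) = (W n).1 := by
    funext ⟨l, hl⟩
    subst hl
    rfl
  have hanti : CantorScheme.Antitone A := fun l b => hsub l.length (W l.length) ⟨b :: l, rfl⟩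
  have hdiamA : ∀ l, ediam (A l) ≤ (l.length : ℝ≥0∞)⁻¹
    | [] => by simp
    | b :: l => hdiam l.length (W l.length) ⟨b :: l, rfl⟩
  refine ⟨A, hanti.closureAntitone fun l => (W l.length).2.1 _, fun α => ?_, fun n => ?_,
    fun l => ⟨k _ (W l.length) ⟨l, rfl⟩, fun b => hk l.length (W l.length) ⟨b :: l, rfl⟩⟩⟩
  · refine tendsto_of_tendsto_of_tendsto_of_le_of_le tendsto_const_nhds
      ENNReal.tendsto_inv_nat_nhds_zero (fun _ => zero_le) fun n => ?_
    simpa only [res_length] using hdiamA (res α n)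
  · have := (W n).2.2
    rwa [← hA n] at this

theorem exists_mem_res_of_not_isThin [PseudoMetricSpace P] [CompleteSpace P]
    {A : List Bool → Set P} (hA : CantorScheme.ClosureAntitone A)
    (hdiam : CantorScheme.VanishingDiam A)
    (hthick : ∀ n, ¬ IsThin fun t : List.Vector Bool n => f '' A t.toList) :
    ∃ x : (ℕ → Bool) → P, ∀ α n, x α ∈ A (res α n) := by
  have hne (l : List Bool) : (A l).Nonempty := by
    rw [nonempty_iff_ne_empty]
    intro hl
    exact hthick l.length (isThin_of_eq_empty (i := ⟨l, rfl⟩) (image_eq_empty.2 hl))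
  have hdom := hA.map_of_vanishingDiam hdiam hne
  exact ⟨fun α => (CantorScheme.inducedMap A).2 ⟨α, hdom ▸ mem_univ α⟩,
    fun α n => CantorScheme.map_mem _ n⟩

theorem fst_eq_fst_of_not_isThin [PseudoMetricSpace P] (hum : Measurable u)
    (hu : Function.Injective u) (huf : Continuous fun x => u (f x).1) {A : List Bool → Set P}
    (hA : CantorScheme.Antitone A) (hdiam : CantorScheme.VanishingDiam A)
    (hthick : ∀ n, ¬ IsThin fun t : List.Vector Bool n => f '' A t.toList)
    {α β : ℕ → Bool} {x y : P} (hx : ∀ n, x ∈ A (res α n)) (hy : ∀ n, y ∈ A (res β n)) :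
    (f x).1 = (f y).1 := by
  refine hu (funext fun k => by_contra fun hne => ?_)
  have hcyl (b : Bool) : MeasurableSet {c | u c k = b} :=
    ((measurable_pi_apply k).comp hum) (measurableSet_singleton b)
  have hnhds (z : P) : {w | u (f w).1 k = u (f z).1 k} ∈ 𝓝 z :=
    ((continuous_apply k).comp huf).continuousAt.preimage_mem_nhds
      ((isOpen_discrete {u (f z).1 k}).mem_nhds rfl)
  obtain ⟨n, hn, hn'⟩ := ((eventually_res_subset_of_mem_nhds hA hdiam hx (hnhds x)).and
    (eventually_res_subset_of_mem_nhds hA hdiam hy (hnhds y))).exists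
  refine hthick n (isThin_of_disjoint_fst (hcyl (u (f x).1 k)) (hcyl (u (f y).1 k)) ?_
    (i := ⟨res α n, res_length α n⟩) (j := ⟨res β n, res_length β n⟩)
    (image_subset_iff.2 hn) (image_subset_iff.2 hn'))
  exact disjoint_left.2 fun c hc hc' => hne (hc.symm.trans hc')

end Scheme

theorem exists_measurableSet_range_subset_of_countable_sections {Q Y Z : Type*}
    [MeasurableSpace Q] [StandardBorelSpace Q] [MeasurableSpace Y] [CountablySeparated Y]
    [MeasurableSpace Z] [CountablySeparated Z] {f : Q → Y × Z} (hf : Measurable f)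
    (hcount : ∀ y, (Prod.mk y ⁻¹' range f).Countable) :
    ∃ B, MeasurableSet B ∧ range f ⊆ B ∧ ∀ y, (Prod.mk y ⁻¹' B).Countable := by
  by_contra hthin
  obtain ⟨u, hum, hu⟩ := measurable_injection_nat_bool_of_countablySeparated Y
  obtain ⟨v, hvm, hv⟩ := measurable_injection_nat_bool_of_countablySeparated Z
  let := upgradeStandardBorel Q
  obtain ⟨t, -, htc, htp⟩ := ((hum.prodMap hvm).comp hf).exists_continuous
  let := t
  let := TopologicalSpace.upgradeIsCompletelyMetrizable Q
  obtain ⟨A, hA, hdiam, hthick, hsplit⟩ :=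
    exists_cantorScheme_not_isThin hvm hv (continuous_snd.comp htc) hthin
  obtain ⟨x, hx⟩ := exists_mem_res_of_not_isThin hA hdiam hthick
  have hsection (α) : (f (x α)).2 ∈ Prod.mk (f (x fun _ => false)).1 ⁻¹' range f := by
    refine ⟨x α, Prod.ext ?_ rfl⟩
    exact fst_eq_fst_of_not_isThin hum hu (continuous_fst.comp htc) hA.antitone hdiam hthick
      (hx α) (hx _)
  have hinj := injective_snd_of_forall_mem_res hsplit hx
  have : Uncountable (ℕ → Bool) := by
    rw [← Cardinal.aleph0_lt_mk_iff]
    simpa using Cardinal.cantor Cardinal.aleph0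
  exact not_countable_univ ((hcount _).preimage_of_injOn hinj.injOn |>.mono fun α _ => hsection α)

theorem analyticSet_inter {Y : Type*} [TopologicalSpace Y] [T2Space Y] {s t : Set Y}
    (hs : AnalyticSet s) (ht : AnalyticSet t) :
    AnalyticSet (s ∩ t) := by
  rw [inter_eq_iInter]
  exact AnalyticSet.iInter (Bool.forall_bool.2 ⟨ht, hs⟩)

section Reflection

variable {Y Y' : Type*} [TopologicalSpace Y] [PolishSpace Y] [MeasurableSpace Y] [BorelSpace Y]
  [TopologicalSpace Y'] [PolishSpace Y'] [MeasurableSpace Y'] [BorelSpace Y']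

theorem exists_measurableSet_prod_subset_left {s : Set Y} {t : Set Y'} (hs : AnalyticSet s)
    (ht : AnalyticSet t) {M : Set (Y × Y')} (hM : MeasurableSet M) (hst : s ×ˢ t ⊆ M) :
    ∃ a, MeasurableSet a ∧ s ⊆ a ∧ a ×ˢ t ⊆ M := by
  have hbad : AnalyticSet (Prod.fst '' (Mᶜ ∩ Prod.snd ⁻¹' t)) :=
    (analyticSet_inter hM.compl.analyticSet (ht.preimage continuous_snd)).image_of_continuous
      continuous_fst
  have hdisj : Disjoint s (Prod.fst '' (Mᶜ ∩ Prod.snd ⁻¹' t)) := by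
    rw [disjoint_left]
    rintro y hy ⟨q, ⟨hqM, hqt⟩, rfl⟩
    exact hqM (hst ⟨hy, hqt⟩)
  obtain ⟨a, hsa, hbad_a, ha⟩ := hs.measurablySeparable hbad hdisj
  refine ⟨a, ha, hsa, fun q hq => by_contra fun hqM => ?_⟩
  exact disjoint_left.1 hbad_a (mem_image_of_mem _ ⟨hqM, hq.2⟩) hq.1

theorem exists_measurableSet_prod_subset {s : Set Y} {t : Set Y'} (hs : AnalyticSet s)
    (ht : AnalyticSet t) {M : Set (Y × Y')} (hM : MeasurableSet M) (hst : s ×ˢ t ⊆ M) :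
    ∃ a b, MeasurableSet a ∧ MeasurableSet b ∧ s ⊆ a ∧ t ⊆ b ∧ a ×ˢ b ⊆ M := by
  obtain ⟨a, ha, hsa, hat⟩ := exists_measurableSet_prod_subset_left hs ht hM hst
  obtain ⟨b, hb, htb, hba⟩ := exists_measurableSet_prod_subset_left ht ha.analyticSet
    (measurable_swap hM) fun q hq => hat ⟨hq.2, hq.1⟩
  exact ⟨a, b, ha, hb, hsa, htb, fun q hq => hba (a := q.swap) ⟨hq.2, hq.1⟩⟩

theorem exists_measurableSet_cube_subset {s : Set Y} (hs : AnalyticSet s)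
    {M : Set (Y × Y × Y)} (hM : MeasurableSet M) (hsM : s ×ˢ s ×ˢ s ⊆ M) :
    ∃ a, MeasurableSet a ∧ s ⊆ a ∧ a ×ˢ a ×ˢ a ⊆ M := by
  have hss : AnalyticSet (s ×ˢ s) :=
    analyticSet_inter (hs.preimage continuous_fst) (hs.preimage continuous_snd)
  obtain ⟨a, c, ha, hc, hsa, hssc, hac⟩ := exists_measurableSet_prod_subset hs hss hM hsM
  obtain ⟨b, d, hb, hd, hsb, hsd, hbd⟩ := exists_measurableSet_prod_subset hs hs hc hssc
  refine ⟨a ∩ b ∩ d, (ha.inter hb).inter hd, subset_inter (subset_inter hsa hsb) hsd, ?_⟩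
  rintro ⟨y, z, w⟩ ⟨hy, hz, hw⟩
  exact hac ⟨hy.1.1, hbd ⟨hz.1.2, hw.2⟩⟩

end Reflection

/-- A countable Borel equivalence relation on `Y`: Borel as a subset of `Y × Y`, with countable
equivalence classes. -/
structure IsCountableBorelEquivalence {Y : Type*} [MeasurableSpace Y] (F : Y → Y → Prop) :
    Prop where
  equivalence : Equivalence F
  measurableSet : MeasurableSet {p : Y × Y | F p.1 p.2}
  countable : ∀ y, {z | F y z}.Countable

theorem IsCountableBorelEquivalence.comap {Y Z : Type*} [MeasurableSpace Y] [MeasurableSpace Z]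
    {F : Z → Z → Prop} (hF : IsCountableBorelEquivalence F) {e : Y → Z} (hem : Measurable e)
    (he : Function.Injective e) : IsCountableBorelEquivalence fun y z => F (e y) (e z) where
  equivalence := hF.equivalence.comap e
  measurableSet := hem.prodMap hem hF.measurableSet
  countable y := (hF.countable (e y)).preimage he

theorem exists_isCountableBorelEquivalence_of_transitive_on {Y : Type*} [TopologicalSpace Y]
    [PolishSpace Y] [MeasurableSpace Y] [BorelSpace Y] {s : Set Y} (hs : AnalyticSet s)
    {T : Set (Y × Y)} (hT : MeasurableSet T) (hsymm : ∀ y z, (y, z) ∈ T → (z, y) ∈ T)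
    (hcount : ∀ y, (Prod.mk y ⁻¹' T).Countable)
    (htrans : ∀ y ∈ s, ∀ z ∈ s, ∀ w ∈ s, (y, z) ∈ T → (z, w) ∈ T → (y, w) ∈ T) :
    ∃ F : Y → Y → Prop, IsCountableBorelEquivalence F ∧
      ∀ y ∈ s, ∀ z ∈ s, F y z ↔ y = z ∨ (y, z) ∈ T := by
  let M : Set (Y × Y × Y) := {q | (q.1, q.2.1) ∈ T → (q.2.1, q.2.2) ∈ T → (q.1, q.2.2) ∈ T}
  have hM : MeasurableSet M :=
    ((by fun_prop : Measurable fun q : Y × Y × Y => (q.1, q.2.1)) hT).imp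
      (((by fun_prop : Measurable fun q : Y × Y × Y => (q.2.1, q.2.2)) hT).imp
        ((by fun_prop : Measurable fun q : Y × Y × Y => (q.1, q.2.2)) hT))
  obtain ⟨a, ha, hsa, haM⟩ := exists_measurableSet_cube_subset hs hM
    fun q hq => htrans _ hq.1 _ hq.2.1 _ hq.2.2
  refine ⟨fun y z => y = z ∨ (y ∈ a ∧ z ∈ a) ∧ (y, z) ∈ T, ⟨⟨fun y => Or.inl rfl, ?_, ?_⟩, ?_,
    fun y => ?_⟩, fun y hy z hz => by simp only [hsa hy, hsa hz, true_and]⟩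
  · rintro y z (rfl | ⟨⟨hy, hz⟩, hyz⟩)
    exacts [Or.inl rfl, Or.inr ⟨⟨hz, hy⟩, hsymm _ _ hyz⟩]
  · rintro y z w (rfl | ⟨⟨hy, hz⟩, hyz⟩) (rfl | ⟨⟨hz', hw⟩, hzw⟩)
    exacts [Or.inl rfl, Or.inr ⟨⟨hz', hw⟩, hzw⟩, Or.inr ⟨⟨hy, hz⟩, hyz⟩,
      Or.inr ⟨⟨hy, hw⟩, haM (a := (y, z, w)) ⟨hy, hz, hw⟩ hyz hzw⟩]
  · exact measurableSet_diagonal.union ((ha.prod ha).inter hT)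
  · exact ((countable_singleton y).union (hcount y)).mono fun z hz =>
      hz.imp Eq.symm fun h => h.2

section Reduction

variable {X Y : Type*} {E : X → X → Prop} {π : X → Y}

theorem mk_mem_image_prodMap_iff (hE : Equivalence E) (hker : ∀ x x', π x = π x' → E x x')
    {x x' : X} : (π x, π x') ∈ Prod.map π π '' {p | E p.1 p.2} ↔ E x x' := by
  refine ⟨?_, fun h => ⟨(x, x'), h, rfl⟩⟩
  rintro ⟨⟨a, a'⟩, h, haa⟩
  obtain ⟨ha, ha'⟩ := Prod.ext_iff.1 haa
  exact hE.trans (hE.symm (hker a x ha)) (hE.trans h (hker a' x' ha'))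

theorem countable_mk_preimage_image_prodMap (hE : Equivalence E)
    (hker : ∀ x x', π x = π x' → E x x') (hcount : ∀ x, (π '' {x' | E x x'}).Countable) (y : Y) :
    (Prod.mk y ⁻¹' (Prod.map π π '' {p | E p.1 p.2})).Countable := by
  by_cases hy : y ∈ range π
  · obtain ⟨x, rfl⟩ := hy
    refine (hcount x).mono fun z hz => ?_
    obtain ⟨⟨a, a'⟩, -, haa⟩ := id hz
    obtain rfl : π a' = z := congrArg Prod.snd haa
    exact mem_image_of_mem π ((mk_mem_image_prodMap_iff hE hker).1 hz)
  · refine countable_empty.mono ?_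
    rintro z ⟨p, -, hp⟩
    exact hy ⟨p.1, congrArg Prod.fst hp⟩

variable [MeasurableSpace X] [StandardBorelSpace X] [MeasurableSpace Y] [StandardBorelSpace Y]

theorem exists_measurableSet_mk_mem_iff (hE : Equivalence E)
    (hEm : MeasurableSet {p : X × X | E p.1 p.2}) (hπ : Measurable π)
    (hker : ∀ x x', π x = π x' → E x x') :
    ∃ S, MeasurableSet S ∧ ∀ x x', (π x, π x') ∈ S ↔ E x x' := by
  have hpre : Prod.map π π ⁻¹' (Prod.map π π '' {p | E p.1 p.2}) = {p | E p.1 p.2} :=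
    ext fun _ => mk_mem_image_prodMap_iff hE hker
  obtain ⟨S, hS, hSR⟩ := (hπ.prodMap hπ).measurableSet_preimage_iff_preimage_val.1 (hpre ▸ hEm)
  refine ⟨S, hS, fun x x' => ?_⟩
  rw [← mk_mem_image_prodMap_iff hE hker]
  exact Set.ext_iff.1 hSR ⟨(π x, π x'), (x, x'), rfl⟩

theorem exists_symmetric_measurableSet_of_countable_image (hE : Equivalence E)
    (hEm : MeasurableSet {p : X × X | E p.1 p.2}) (hπ : Measurable π)
    (hker : ∀ x x', π x = π x' → E x x') (hcount : ∀ x, (π '' {x' | E x x'}).Countable) :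
    ∃ T : Set (Y × Y), MeasurableSet T ∧ (∀ y z, (y, z) ∈ T → (z, y) ∈ T) ∧
      (∀ y, (Prod.mk y ⁻¹' T).Countable) ∧ ∀ x x', (π x, π x') ∈ T ↔ E x x' := by
  obtain ⟨S, hS, hSE⟩ := exists_measurableSet_mk_mem_iff hE hEm hπ hker
  have hRcount := countable_mk_preimage_image_prodMap hE hker hcount
  rw [image_eq_range] at hRcount
  have := hEm.standardBorel
  obtain ⟨B, hB, hRB, hBcount⟩ := exists_measurableSet_range_subset_of_countable_sections
    ((hπ.prodMap hπ).comp measurable_subtype_coe) hRcount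
  have mem_inter {x x'} (h : E x x') : (π x, π x') ∈ S ∩ B :=
    ⟨(hSE x x').2 h, hRB ⟨⟨(x, x'), h⟩, rfl⟩⟩
  exact ⟨S ∩ B ∩ Prod.swap ⁻¹' (S ∩ B), (hS.inter hB).inter (measurable_swap (hS.inter hB)),
    fun y z h => h.symm, fun y => (hBcount y).mono fun z hz => hz.1.2,
    fun x x' => ⟨fun h => (hSE x x').1 h.1.1, fun h => ⟨mem_inter h, mem_inter (hE.symm h)⟩⟩⟩

end Reduction

theorem exists_isCountableBorelEquivalence_of_standardBorelSpace {X Y : Type*} [MeasurableSpace X]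
    [StandardBorelSpace X] [MeasurableSpace Y] [StandardBorelSpace Y] {E : X → X → Prop}
    (hE : Equivalence E) (hEm : MeasurableSet {p : X × X | E p.1 p.2})
    {π : X → Y} (hπ : Measurable π) (hker : ∀ x x', π x = π x' → E x x')
    (hcount : ∀ x, (π '' {x' | E x x'}).Countable) :
    ∃ F : Y → Y → Prop, IsCountableBorelEquivalence F ∧ ∀ x x', E x x' ↔ F (π x) (π x') := by
  let := upgradeStandardBorel Y
  obtain ⟨T, hT, hsymm, hTcount, hTE⟩ :=
    exists_symmetric_measurableSet_of_countable_image hE hEm hπ hker hcount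
  have hrange : AnalyticSet (range π) := image_univ ▸ MeasurableSet.univ.analyticSet_image hπ
  obtain ⟨F, hF, hFT⟩ :=
    exists_isCountableBorelEquivalence_of_transitive_on hrange hT hsymm hTcount (by
      rintro _ ⟨x, rfl⟩ _ ⟨x', rfl⟩ _ ⟨x'', rfl⟩
      simpa only [hTE] using hE.trans)
  refine ⟨F, hF, fun x x' => ?_⟩
  rw [hFT _ (mem_range_self x) _ (mem_range_self x'), hTE, or_iff_right_of_imp (hker x x')]

end CountableReduction

open CountableReduction

theorem statement14_general {X Y : Type*} [MeasurableSpace X] [StandardBorelSpace X]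
    [MeasurableSpace Y] [MeasurableSpace.CountablySeparated Y] {E : X → X → Prop}
    (hE : Equivalence E) (hEm : MeasurableSet {p : X × X | E p.1 p.2}) {π : X → Y}
    (hπ : Measurable π) (hker : ∀ x x', π x = π x' → E x x')
    (hcount : ∀ x, (π '' {x' | E x x'}).Countable) :
    ∃ F : Y → Y → Prop, IsCountableBorelEquivalence F ∧ ∀ x x', E x x' ↔ F (π x) (π x') := by
  obtain ⟨e, hem, he⟩ := MeasurableSpace.measurable_injection_nat_bool_of_countablySeparated Y
  obtain ⟨F, hF, hEF⟩ := exists_isCountableBorelEquivalence_of_standardBorelSpace hE hEm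
    (hem.comp hπ) (fun x x' h => hker x x' (he h)) fun x => image_comp e π _ ▸ (hcount x).image e
  exact ⟨_, hF.comap hem he, hEF⟩

/-- If `π` is a Borel reduction of a Borel equivalence relation `E` on
`X` to a countable (partial) equivalence relation `F` on a subset of `Y`, then there
is a countable Borel equivalence relation `F'` on all of `Y` such that `π` is also a
reduction of `E` to `F'`. -/
theorem statement14 {X Y : Type*} [TopologicalSpace X] [PolishSpace X]
    [MeasurableSpace X] [BorelSpace X]
    [TopologicalSpace Y] [PolishSpace Y] [MeasurableSpace Y] [BorelSpace Y]
    (E : X → X → Prop) (hE : Equivalence E)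
    (hEBorel : MeasurableSet {p : X × X | E p.1 p.2})
    (F : Y → Y → Prop) (hFsym : ∀ y z, F y z → F z y)
    (hFtrans : ∀ y z w, F y z → F z w → F y w)
    (hFcount : ∀ y : Y, {z : Y | F y z}.Countable)
    (π : X → Y) (hπ : Measurable π)
    (hred : ∀ x x', E x x' ↔ F (π x) (π x')) :
    ∃ F' : Y → Y → Prop, Equivalence F' ∧
      MeasurableSet {p : Y × Y | F' p.1 p.2} ∧
      (∀ y : Y, {z : Y | F' y z}.Countable) ∧
      ∀ x x', E x x' ↔ F' (π x) (π x') := by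
  obtain ⟨F', hF', hEF'⟩ := statement14_general hE hEBorel hπ
    (fun x x' h => (hred x x').2 (h ▸ (hred x x).1 (hE.refl x)))
    fun x => (hFcount (π x)).mono (image_subset_iff.2 fun x' => (hred x x').1)
  exact ⟨F', hF'.equivalence, hF'.measurableSet, hF'.countable, hEF'⟩
end

section
/- Let X be a Polish space and let E and F be Borel equivalence relations on X with E ⊆ F such that E has countable index in F (every F-class contains only countably many E-classes). If D is a smooth-like subequivalence relation situation as follows: suppose φ : X → X' is a Borel reduction of F to an equivalence relation F' with countable classes on a Polish space X', and let D = (φ × φ)⁻¹(equality on X'). Then D ∩ E is smooth, i.e., Borel reducible to the equality relation on a Polish space. -/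
open Set

/-!
Let `D` be the relation of having the same image under `φ`. In a finer Polish topology with the
same Borel sets, `φ` is continuous. By the dichotomy of Kechris, Solecki and Todorcevic, either
`D \ E` has countable Borel chromatic number or there is a continuous homomorphism `ψ` from `G₀` to
`D \ E`. In the second case `φ ∘ ψ` is constant, since the `G₀`-component of each point is dense, so
the image of `ψ` lies in a single `D`-class, which meets countably many `E`-classes. The preimages
of these `E`-classes are `G₀`-independent, hence meagre, and they cover the Cantor space: a
contradiction.

So the space is a union of countably many Borel sets `C` independent for `D \ E`. Each `C` is
disjoint from the set of its `D \ E`-neighbours. Both are analytic and the second one is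
`D ∩ E`-invariant, so they are separated by a `D ∩ E`-invariant Borel set. These countably many
sets, together with `φ`, separate the classes of `D ∩ E`.

The homomorphism `ψ` of the dichotomy is a limit of finite cubes of points of the space, built by
joining two copies of the previous cube by one edge, while the set of possible cubes stays large.
-/

open Filter Function PiNat Topology TopologicalSpace
open MeasureTheory (AnalyticSet analyticSet_range_of_polishSpace borel_eq_borel_of_le)

section Independent

variable {X : Type*} {G : SetRel X X} {A : Set X}

/-- A `G`-independent set: no two of its points, equal or not, are joined by an edge of `G`. -/
def IsIndependentSet (G : SetRel X X) (A : Set X) : Prop :=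
  ∀ ⦃x⦄, x ∈ A → ∀ ⦃y⦄, y ∈ A → (x, y) ∉ G

lemma isIndependentSet_iff_disjoint_image : IsIndependentSet G A ↔ Disjoint A (G.image A) := by
  rw [disjoint_right]
  exact ⟨fun h y ⟨x, hx, hxy⟩ hy => h hx hy hxy, fun h x hx y hy hxy => h ⟨x, hx, hxy⟩ hy⟩

/-- The σ-ideal of sets that are negligible for Borel colouring: countable unions of Borel
`G`-independent sets. That `univ` is one says that `G` has countable Borel chromatic number. -/
def IsSigmaIndependent [MeasurableSpace X] (G : SetRel X X) (A : Set X) : Prop :=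
  ∃ 𝒮 : Set (Set X), 𝒮.Countable ∧
    (∀ C ∈ 𝒮, MeasurableSet C ∧ IsIndependentSet G C) ∧ A = ⋃₀ 𝒮

namespace IsSigmaIndependent

variable [MeasurableSpace X]

lemma measurableSet (h : IsSigmaIndependent G A) : MeasurableSet A := by
  obtain ⟨𝒮, h𝒮, hC, rfl⟩ := h
  exact .sUnion h𝒮 fun C hC' => (hC C hC').1

lemma of_isIndependentSet (hA : MeasurableSet A) (h : IsIndependentSet G A) :
    IsSigmaIndependent G A :=
  ⟨{A}, countable_singleton A, by rintro _ rfl; exact ⟨hA, h⟩, (sUnion_singleton A).symm⟩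

lemma iUnion {ι : Type*} [Countable ι] {B : ι → Set X} (h : ∀ i, IsSigmaIndependent G (B i)) :
    IsSigmaIndependent G (⋃ i, B i) := by
  choose 𝒮 h𝒮 hC hB using h
  refine ⟨⋃ i, 𝒮 i, countable_iUnion h𝒮, fun C hC' => ?_, ?_⟩
  · obtain ⟨i, hi⟩ := mem_iUnion.1 hC'
    exact hC i C hi
  · rw [sUnion_iUnion, iUnion_congr hB]

lemma union {B : Set X} (hA : IsSigmaIndependent G A) (hB : IsSigmaIndependent G B) :
    IsSigmaIndependent G (A ∪ B) := by
  rw [union_eq_iUnion]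
  exact iUnion (Bool.forall_bool.2 ⟨hB, hA⟩)

end IsSigmaIndependent

end Independent

section Separation

variable {X : Type*} [TopologicalSpace X] [PolishSpace X] {A B : Set X}

lemma analyticSet_relImage {Y : Type*} [TopologicalSpace Y] [PolishSpace Y] {R : SetRel X Y}
    (hR : AnalyticSet R) (hA : AnalyticSet A) : AnalyticSet (R.image A) := by
  have himage : R.image A = Prod.snd '' (R ∩ Prod.fst ⁻¹' A) := by
    ext y
    exact ⟨fun ⟨x, hx, hxy⟩ => ⟨(x, y), ⟨hxy, hx⟩, rfl⟩,
      fun ⟨p, ⟨hp, hp'⟩, hpy⟩ => ⟨p.1, hp', hpy ▸ hp⟩⟩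
  have hinter : AnalyticSet (R ∩ Prod.fst ⁻¹' A) := by
    rw [inter_eq_iInter]
    exact .iInter (Bool.forall_bool.2 ⟨hA.preimage continuous_fst, hR⟩)
  rw [himage]
  exact hinter.image_of_continuous continuous_snd

variable [MeasurableSpace X] [BorelSpace X]

lemma exists_measurableSet_isIndependentSet_superset {G : SetRel X X} (hG : AnalyticSet G)
    (hA : AnalyticSet A) (h : IsIndependentSet G A) :
    ∃ B, A ⊆ B ∧ MeasurableSet B ∧ IsIndependentSet G B := by
  obtain ⟨U, hAU, hUA, hU⟩ := hA.measurablySeparable (analyticSet_relImage hG hA)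
    (isIndependentSet_iff_disjoint_image.1 h)
  have hG' : AnalyticSet G.inv := hG.preimage continuous_swap
  have hdisj : Disjoint A (G.inv.image U) :=
    disjoint_right.2 fun x ⟨y, hy, hxy⟩ hx => disjoint_left.1 hUA ⟨x, hx, hxy⟩ hy
  obtain ⟨V, hAV, hVU, hV⟩ := hA.measurablySeparable (analyticSet_relImage hG' hU.analyticSet) hdisj
  exact ⟨U ∩ V, subset_inter hAU hAV, hU.inter hV,
    fun x hx y hy hxy => disjoint_left.1 hVU ⟨y, hy.1, hxy⟩ hx.2⟩

lemma exists_measurableSet_image_subset {R : SetRel X X} (hR : AnalyticSet R)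
    (hA : AnalyticSet A) (hB : AnalyticSet B) (hRB : R.preimage B ⊆ B) (hAB : Disjoint A B) :
    ∃ U, A ⊆ U ∧ MeasurableSet U ∧ Disjoint U B ∧ R.image U ⊆ U := by
  have hstep : ∀ U : {U : Set X // MeasurableSet U ∧ Disjoint U B},
      ∃ V : {V : Set X // MeasurableSet V ∧ Disjoint V B}, R.image U ⊆ V := by
    rintro ⟨U, hU, hUB⟩
    have hdisj : Disjoint (R.image U) B :=
      disjoint_right.2 fun y hy ⟨x, hx, hxy⟩ => disjoint_left.1 hUB hx (hRB ⟨y, hy, hxy⟩)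
    obtain ⟨V, hUV, hBV, hV⟩ :=
      (analyticSet_relImage hR hU.analyticSet).measurablySeparable hB hdisj
    exact ⟨⟨V, hV, hBV.symm⟩, hUV⟩
  choose next hnext using hstep
  obtain ⟨U₀, hAU₀, hBU₀, hU₀⟩ := hA.measurablySeparable hB hAB
  let U (n : ℕ) := next^[n] ⟨U₀, hU₀, hBU₀.symm⟩
  have hU : ∀ n, R.image (U n) ⊆ U (n + 1) := fun n => by
    simp only [U, iterate_succ_apply']
    exact hnext _
  refine ⟨⋃ n, U n, subset_iUnion_of_subset 0 hAU₀, .iUnion fun n => (U n).2.1,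
    disjoint_iUnion_left.2 fun n => (U n).2.2, ?_⟩
  rw [SetRel.image_iUnion]
  exact iUnion_subset fun n => subset_iUnion_of_subset (n + 1) (hU n)

end Separation

section Cylinder

variable {E : ℕ → Type*} [∀ n, TopologicalSpace (E n)]

lemma isClosed_cylinder [∀ n, T1Space (E n)] (x : ∀ n, E n) (n : ℕ) :
    IsClosed (cylinder x n) := by
  rw [cylinder_eq_pi]
  exact isClosed_set_pi fun _ _ => isClosed_singleton

variable [∀ n, DiscreteTopology (E n)]

lemma exists_denseSeq_mem_cylinder [SeparableSpace (∀ n, E n)] [Nonempty (∀ n, E n)]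
    (x : ∀ n, E n) (n : ℕ) : ∃ k, denseSeq (∀ n, E n) k ∈ cylinder x n :=
  (denseRange_denseSeq _).exists_mem_open (isOpen_cylinder E x n) ⟨x, self_mem_cylinder x n⟩

lemma exists_cylinder_eventually_mem {W : Set (∀ n, E n)} (hW : BaireMeasurableSet W)
    (hW' : ¬ IsMeagre W) : ∃ y m, ∀ᶠ x in residual (∀ n, E n), x ∈ cylinder y m → x ∈ W := by
  obtain ⟨U, hU, hWU⟩ := hW.residualEq_isOpen
  have hmem : ∀ᶠ x in residual (∀ n, E n), x ∈ W ↔ x ∈ U := hWU.mono fun x hx => iff_of_eq hx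
  obtain ⟨y, hy⟩ : U.Nonempty := by
    by_contra hempty
    rw [not_nonempty_iff_eq_empty] at hempty
    refine hW' (hmem.mono fun x hx hxW => ?_)
    simpa [hempty] using hx.1 hxW
  obtain ⟨_, ⟨z, m, rfl⟩, -, hzU⟩ :=
    (isTopologicalBasis_cylinders E).exists_subset_of_mem_open hy hU
  exact ⟨z, m, hmem.mono fun x hx hxz => hx.2 (hzU hxz)⟩

end Cylinder

section GZero

/-- The graph `G₀` of Kechris, Solecki and Todorcevic on `ℕ → Bool`, for a sequence of binary words:
the `k`-th word consists of the first `k` entries of `s k`, and an edge changes from `false` to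
`true` the bit that follows one of these words. -/
def gZero (s : ℕ → ℕ → Bool) : SetRel (ℕ → Bool) (ℕ → Bool) :=
  {p | ∃ k, ∃ x ∈ cylinder (s k) k, p = (update x k false, update x k true)}

variable {s : ℕ → ℕ → Bool}

lemma exists_seq_frequently_mem_cylinder :
    ∃ s : ℕ → ℕ → Bool, ∀ y m, ∃ n ≥ m, s n ∈ cylinder y m := by
  refine ⟨fun n => denseSeq (ℕ → Bool) n.unpair.1, fun y m => ?_⟩
  obtain ⟨k, hk⟩ := exists_denseSeq_mem_cylinder y m
  exact ⟨Nat.pair k m, Nat.right_le_pair k m, by simpa only [Nat.unpair_pair] using hk⟩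

lemma eq_of_forall_ge_eq_of_gZero {Y : Type*} {f : (ℕ → Bool) → Y}
    (hf : ∀ p ∈ gZero s, f p.1 = f p.2) (n : ℕ) {x y : ℕ → Bool} (h : ∀ i ≥ n, x i = y i) :
    f x = f y := by
  induction n generalizing x y with
  | zero => rw [funext fun i => h i i.zero_le]
  | succ n ih =>
    -- `z` with either value in place `n` is reached from `x` and `y` by the induction hypothesis, and
    -- its two versions form an edge.
    let z : ℕ → Bool := fun i => if i < n then s n i else x i
    have hz : f (update z n false) = f (update z n true) :=
      hf _ ⟨n, z, fun i hi => if_pos hi, rfl⟩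
    have hz' : ∀ b, f (update z n b) = f (update z n true) := Bool.forall_bool.2 ⟨hz, rfl⟩
    have hnode : ∀ w : ℕ → Bool, (∀ i ≥ n + 1, x i = w i) → f w = f (update z n true) := by
      intro w hw
      rw [← hz' (w n)]
      refine ih fun i hi => ?_
      rcases hi.eq_or_lt with rfl | hi
      · rw [update_self]
      · rw [update_of_ne hi.ne', ← hw i hi]
        exact (if_neg hi.not_gt).symm
    rw [hnode x fun _ _ => rfl, hnode y h]

lemma eq_of_continuous_of_gZero {Y : Type*} [TopologicalSpace Y] [T2Space Y]
    {f : (ℕ → Bool) → Y} (hf : Continuous f) (h : ∀ p ∈ gZero s, f p.1 = f p.2)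
    (x y : ℕ → Bool) : f x = f y := by
  let z (n : ℕ) : ℕ → Bool := fun i => if i < n then y i else x i
  have hz : Tendsto z atTop (𝓝 y) := tendsto_pi_nhds.2 fun i =>
    tendsto_const_nhds.congr' <| (eventually_gt_atTop i).mono fun n hn => (if_pos hn).symm
  refine tendsto_nhds_unique (tendsto_const_nhds.congr fun n => ?_) ((hf.tendsto y).comp hz)
  exact eq_of_forall_ge_eq_of_gZero h n fun i hi => (if_neg hi.not_gt).symm

lemma tendsto_update_not_residual (n : ℕ) :
    Tendsto (fun x : ℕ → Bool => update x n (!x n)) (residual _) (residual _) := by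
  have hcont : Continuous fun x : ℕ → Bool => update x n (!x n) :=
    continuous_id.update n <| (continuous_of_discreteTopology (f := Bool.not)).comp
      (continuous_apply (A := fun _ => Bool) n)
  have hinv : Involutive fun x : ℕ → Bool => update x n (!x n) := fun x => by simp
  let e : (ℕ → Bool) ≃ₜ (ℕ → Bool) := ⟨hinv.toPerm, hcont, hcont⟩
  exact tendsto_residual_of_isOpenMap hcont e.isOpenMap

lemma isMeagre_of_isIndependentSet_gZero (hs : ∀ y m, ∃ n ≥ m, s n ∈ cylinder y m)
    {W : Set (ℕ → Bool)} (hW : BaireMeasurableSet W) (hind : IsIndependentSet (gZero s) W) :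
    IsMeagre W := by
  by_contra hmeagre
  obtain ⟨y, m, hy⟩ := exists_cylinder_eventually_mem hW hmeagre
  obtain ⟨n, hmn, hn⟩ := hs y m
  obtain ⟨x, hx, hxW, hxW'⟩ := (dense_of_mem_residual
    (hy.and ((tendsto_update_not_residual n).eventually hy))).inter_open_nonempty
    _ (isOpen_cylinder _ (update (s n) n false) (n + 1)) ⟨_, self_mem_cylinder _ _⟩
  have hxn : x n = false := (hx n n.lt_succ_self).trans (update_self ..)
  have hxs : x ∈ cylinder (s n) n := fun i hi =>
    (hx i (hi.trans n.lt_succ_self)).trans (update_of_ne hi.ne ..)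
  have hcyl : cylinder (s n) n ⊆ cylinder y m := by
    rw [← mem_cylinder_iff_eq.1 hn]
    exact cylinder_anti _ hmn
  have hxs' : update x n (!x n) ∈ cylinder (s n) n := fun i hi =>
    (update_of_ne hi.ne ..).trans (hxs i hi)
  refine hind (hxW (hcyl hxs)) (hxW' (hcyl hxs')) ⟨n, x, hxs, ?_⟩
  rw [hxn, Bool.not_false, ← hxn, update_eq_self]

end GZero

namespace CubeCode

section Cube

/-- The `j`-th of the three sequences interleaved in `h`. A code of an `(n + 1)`-dimensional cube of
points interleaves codes of its two `n`-dimensional faces and a code of an edge joining them. -/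
def slot (j : ℕ) (h : ℕ → ℕ) : ℕ → ℕ := fun i => h (3 * i + j)

lemma continuous_slot (j : ℕ) : Continuous (slot j) :=
  continuous_pi fun _ => continuous_apply _

lemma slot_mem_cylinder {j m : ℕ} (hj : j < 3) {h h' : ℕ → ℕ} (hh' : h' ∈ cylinder h (3 * m)) :
    slot j h' ∈ cylinder (slot j h) m :=
  fun _ hi => hh' _ (by lia)

lemma exists_slot_eq (h₀ h₁ h₂ : ℕ → ℕ) : ∃ h, slot 0 h = h₀ ∧ slot 1 h = h₁ ∧ slot 2 h = h₂ := by
  refine ⟨fun i => if i % 3 = 0 then h₀ (i / 3) else if i % 3 = 1 then h₁ (i / 3) else h₂ (i / 3),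
    ?_, ?_, ?_⟩ <;> funext i
  · simp [slot]
  · simp [slot, Nat.add_mod, show (3 * i + 1) / 3 = i by lia]
  · simp [slot, Nat.add_mod, show (3 * i + 2) / 3 = i by lia]

variable {X : Type*} {π : (ℕ → ℕ) → X} {Z : Set X} {n : ℕ}

/-- The vertex with address `x 0, …, x (n - 1)` of the `n`-dimensional cube coded by `h`; points of
`X` are coded by `π`. -/
def vertex (π : (ℕ → ℕ) → X) : ℕ → (ℕ → Bool) → (ℕ → ℕ) → X
  | 0, _, h => π h
  | n + 1, x, h => vertex π n x (slot (x n).toNat h)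

lemma continuous_vertex [TopologicalSpace X] (hπ : Continuous π) (n : ℕ) (x : ℕ → Bool) :
    Continuous (vertex π n x) := by
  induction n with
  | zero => exact hπ
  | succ n ih => exact ih.comp (continuous_slot _)

lemma vertex_congr {x y : ℕ → Bool} (h : x ∈ cylinder y n) : vertex π n x = vertex π n y := by
  induction n with
  | zero => rfl
  | succ n ih =>
    funext c
    rw [vertex, vertex, ih (cylinder_anti y n.le_succ h), h n n.lt_succ_self]

/-- The set of codes of `n`-dimensional cubes all of whose vertices lie in `Z`. -/
def cubesIn (π : (ℕ → ℕ) → X) (n : ℕ) (Z : Set X) : Set (ℕ → ℕ) :=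
  {h | ∀ x, vertex π n x h ∈ Z}

lemma cubesIn_mono : Monotone (cubesIn π n) :=
  fun _ _ h _ hc x => h (hc x)

lemma cubesIn_succ :
    cubesIn π (n + 1) Z = slot 0 ⁻¹' cubesIn π n Z ∩ slot 1 ⁻¹' cubesIn π n Z := by
  have hface (b : Bool) (x : ℕ → Bool) (h : ℕ → ℕ) :
      vertex π (n + 1) (update x n b) h = vertex π n x (slot b.toNat h) := by
    rw [vertex, update_self, vertex_congr fun i hi => update_of_ne hi.ne b x]
  ext h
  refine ⟨fun hh => ⟨fun x => ?_, fun x => ?_⟩, fun ⟨h₀, h₁⟩ x => ?_⟩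
  · exact hface false x h ▸ hh (update x n false)
  · exact hface true x h ▸ hh (update x n true)
  · cases hx : x n <;> rw [vertex, hx]
    exacts [h₀ x, h₁ x]

lemma measurableSet_cubesIn [TopologicalSpace X] [MeasurableSpace X] [BorelSpace X]
    (hπ : Continuous π) (hZ : MeasurableSet Z) (n : ℕ) : MeasurableSet (cubesIn π n Z) := by
  induction n with
  | zero =>
    have h : cubesIn π 0 Z = π ⁻¹' Z := ext fun h => forall_const (b := π h ∈ Z) (ℕ → Bool)
    exact h ▸ hπ.measurable hZ
  | succ n ih =>
    rw [cubesIn_succ]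
    exact ((continuous_slot 0).measurable ih).inter ((continuous_slot 1).measurable ih)

/-- The set of codes of `(n + 1)`-dimensional cubes whose two faces have codes in `Q` and whose
vertices at the address `w` of the two faces are joined by the edge coded, via `f`, by the last
slot. -/
def double (π : (ℕ → ℕ) → X) (f : (ℕ → ℕ) → X × X) (n : ℕ) (w : ℕ → Bool) (Q : Set (ℕ → ℕ)) :
    Set (ℕ → ℕ) :=
  {h | slot 0 h ∈ Q ∧ slot 1 h ∈ Q ∧
    f (slot 2 h) = (vertex π n w (slot 0 h), vertex π n w (slot 1 h))}

lemma isClosed_double [TopologicalSpace X] [T2Space X] {f : (ℕ → ℕ) → X × X} (hπ : Continuous π)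
    (hf : Continuous f) (n : ℕ) (w : ℕ → Bool) {Q : Set (ℕ → ℕ)} (hQ : IsClosed Q) :
    IsClosed (double π f n w Q) := by
  have hv := continuous_vertex hπ n w
  exact (hQ.preimage (continuous_slot 0)).inter <| (hQ.preimage (continuous_slot 1)).inter <|
    isClosed_eq (hf.comp (continuous_slot 2))
      ((hv.comp (continuous_slot 0)).prodMk (hv.comp (continuous_slot 1)))

end Cube

section Large

variable {X : Type*} [MeasurableSpace X] {G : SetRel X X} {π : (ℕ → ℕ) → X} {n : ℕ}
  {Q : Set (ℕ → ℕ)}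

/-- A set of codes of `n`-dimensional cubes is large if no Borel set of countable Borel chromatic
number meets all the cubes coded. -/
def IsLarge (G : SetRel X X) (π : (ℕ → ℕ) → X) (n : ℕ) (Q : Set (ℕ → ℕ)) : Prop :=
  ∀ A, IsSigmaIndependent G A → (Q ∩ cubesIn π n Aᶜ).Nonempty

namespace IsLarge

lemma nonempty (hQ : IsLarge G π n Q) : Q.Nonempty :=
  (hQ ∅ (.of_isIndependentSet .empty fun _ h => h.elim)).left

lemma univ_zero (hπ : Surjective π) (hG : ¬ IsSigmaIndependent G univ) :
    IsLarge G π 0 univ := by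
  intro A hA
  obtain ⟨x, hx⟩ : Aᶜ.Nonempty := nonempty_compl.2 fun h => hG (h ▸ hA)
  obtain ⟨h, rfl⟩ := hπ x
  exact ⟨h, mem_univ h, fun _ => hx⟩

lemma exists_inter {ι : Type*} [Countable ι] {P : ι → Set (ℕ → ℕ)} (hP : ⋃ i, P i = univ)
    (hQ : IsLarge G π n Q) : ∃ i, IsLarge G π n (Q ∩ P i) := by
  by_contra! hsmall
  simp only [IsLarge, not_forall] at hsmall
  choose A hA hempty using hsmall
  obtain ⟨h, hhQ, hh⟩ := hQ _ (.iUnion hA)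
  obtain ⟨i, hi⟩ := mem_iUnion.1 (hP ▸ mem_univ h)
  exact hempty i ⟨h, ⟨hhQ, hi⟩, cubesIn_mono (compl_subset_compl.2 (subset_iUnion A i)) hh⟩

lemma exists_subset_cylinder (hQ : IsLarge G π n Q) (m : ℕ) :
    ∃ g, IsLarge G π n (Q ∩ cylinder g m) := by
  let d := denseSeq (ℕ → ℕ)
  suffices hcover : ⋃ k, cylinder (d k) m = univ from
    (hQ.exists_inter hcover).elim fun k hk => ⟨d k, hk⟩
  refine eq_univ_of_forall fun h => mem_iUnion.2 ?_
  obtain ⟨k, hk⟩ := exists_denseSeq_mem_cylinder h m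
  exact ⟨k, (mem_cylinder_comm _ _ _).1 hk⟩

lemma double [TopologicalSpace X] [PolishSpace X] [BorelSpace X] {f : (ℕ → ℕ) → X × X}
    (hπ : Continuous π) (hf : Continuous f) (hQ : MeasurableSet Q)
    (hlarge : IsLarge (range f) π n Q) (w : ℕ → Bool) :
    IsLarge (range f) π (n + 1) (double π f n w Q) := by
  intro A hA
  let V : Set X := vertex π n w '' (Q ∩ cubesIn π n Aᶜ)
  have hcodes : MeasurableSet (Q ∩ cubesIn π n Aᶜ) :=
    hQ.inter (measurableSet_cubesIn hπ hA.measurableSet.compl n)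
  have hV : AnalyticSet V :=
    hcodes.analyticSet.image_of_continuous (continuous_vertex hπ n w)
  have hdep : ¬ IsIndependentSet (range f) V := by
    intro hind
    obtain ⟨B, hVB, hB, hBind⟩ :=
      exists_measurableSet_isIndependentSet_superset (analyticSet_range_of_polishSpace hf) hV hind
    obtain ⟨h, hhQ, hh⟩ := hlarge _ (hA.union (.of_isIndependentSet hB hBind))
    have hhA := cubesIn_mono (compl_subset_compl.2 subset_union_left) hh
    exact hh w (.inr (hVB ⟨h, ⟨hhQ, hhA⟩, rfl⟩))
  simp only [IsIndependentSet, not_forall, not_not] at hdep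
  obtain ⟨_, ⟨h₀, ⟨hQ₀, hA₀⟩, rfl⟩, _, ⟨h₁, ⟨hQ₁, hA₁⟩, rfl⟩, e, he⟩ := hdep
  obtain ⟨h, rfl, rfl, rfl⟩ := exists_slot_eq h₀ h₁ e
  exact ⟨h, ⟨hQ₀, hQ₁, he⟩, cubesIn_succ ▸ ⟨hA₀, hA₁⟩⟩

end IsLarge

-- The size of the cylinders is chosen so that `3 ^ n * n` entries of the code of an `n`-dimensional
-- cube determine `n` entries of the codes of its vertices.
lemma exists_seq_subset_double [TopologicalSpace X] [PolishSpace X] [BorelSpace X]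
    {f : (ℕ → ℕ) → X × X} (hπ : Continuous π) (hπ' : Surjective π) (hf : Continuous f)
    (h : ¬ IsSigmaIndependent (range f) univ) (s : ℕ → ℕ → Bool) :
    ∃ Q : ℕ → Set (ℕ → ℕ), (∀ n, IsClosed (Q n)) ∧ (∀ n, (Q n).Nonempty) ∧
      (∀ n, Q (n + 1) ⊆ double π f n (s n) (Q n)) ∧ ∀ n, ∃ g, Q n ⊆ cylinder g (3 ^ n * n) := by
  have hstep (n : ℕ) (Q : {Q // IsClosed Q ∧ IsLarge (range f) π n Q}) :
      ∃ Q' : {Q // IsClosed Q ∧ IsLarge (range f) π (n + 1) Q},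
        Q'.1 ⊆ double π f n (s n) Q ∧ ∃ g, Q'.1 ⊆ cylinder g (3 ^ (n + 1) * (n + 1)) := by
    obtain ⟨Q, hQ, hlarge⟩ := Q
    obtain ⟨g, hg⟩ := (hlarge.double hπ hf hQ.measurableSet (s n)).exists_subset_cylinder
      (3 ^ (n + 1) * (n + 1))
    exact ⟨⟨_, (isClosed_double hπ hf n (s n) hQ).inter (isClosed_cylinder g _), hg⟩,
      inter_subset_left, g, inter_subset_right⟩
  choose next hdouble hcyl using hstep
  let Q (n : ℕ) : {Q // IsClosed Q ∧ IsLarge (range f) π n Q} :=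
    n.rec ⟨univ, isClosed_univ, .univ_zero hπ' h⟩ next
  refine ⟨fun n => (Q n).1, fun n => (Q n).2.1, fun n => (Q n).2.2.nonempty,
    fun n => hdouble n (Q n), fun n => ?_⟩
  cases n with
  | zero => exact ⟨0, by simp⟩
  | succ n => exact hcyl n (Q n)

end Large

section Branch

variable {Q : ℕ → Set (ℕ → ℕ)} {c : ℕ → ℕ → ℕ} {n j : ℕ} {x y : ℕ → Bool}

/-- Starting from the code `c (n + j)` of an `(n + j)`-dimensional cube, the code of the
`n`-dimensional face with address `x n, …, x (n + j - 1)`. -/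
def face (c : ℕ → ℕ → ℕ) : ℕ → ℕ → (ℕ → Bool) → ℕ → ℕ
  | 0, n, _ => c n
  | j + 1, n, x => slot (x n).toNat (face c j (n + 1) x)

lemma face_congr (h : ∀ i ≥ n, x i = y i) : face c j n x = face c j n y := by
  induction j generalizing n with
  | zero => rfl
  | succ j ih => rw [face, face, h n le_rfl, ih fun i hi => h i (n.le_succ.trans hi)]

lemma continuous_face (c : ℕ → ℕ → ℕ) (j n : ℕ) : Continuous (face c j n) := by
  induction j generalizing n with
  | zero => exact continuous_const
  | succ j ih =>
    have hslot : Continuous fun p : Bool × (ℕ → ℕ) => slot p.1.toNat p.2 :=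
      continuous_prod_of_discrete_left.2 fun b => continuous_slot b.toNat
    exact hslot.comp ((continuous_apply n).prodMk (ih (n + 1)))

lemma face_mem (hc : ∀ n, c n ∈ Q n) (hQ : ∀ n, ∀ h ∈ Q (n + 1), ∀ b : Bool, slot b.toNat h ∈ Q n)
    (j n : ℕ) (x : ℕ → Bool) : face c j n x ∈ Q n := by
  induction j generalizing n with
  | zero => exact hc n
  | succ j ih => exact hQ n _ (ih (n + 1)) (x n)

lemma face_succ_mem_cylinder (hface : ∀ j n x, face c j n x ∈ Q n)
    (hQ : ∀ n, ∃ g, Q n ⊆ cylinder g (3 ^ n * n)) (j n : ℕ) (x : ℕ → Bool) :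
    face c (j + 1) n x ∈ cylinder (face c j n x) (3 ^ n * (n + j)) := by
  induction j generalizing n with
  | zero =>
    obtain ⟨g, hg⟩ := hQ n
    exact mem_cylinder_iff_eq.2 <| (mem_cylinder_iff_eq.1 (hg (hface 1 n x))).trans
      (mem_cylinder_iff_eq.1 (hg (hface 0 n x))).symm
  | succ j ih =>
    have hsucc := ih (n + 1)
    rw [show 3 ^ (n + 1) * (n + 1 + j) = 3 * (3 ^ n * (n + (j + 1))) by ring] at hsucc
    exact slot_mem_cylinder ((Bool.toNat_lt _).trans (by simp)) hsucc

/-- The limit of `face c j n x` as `j` tends to infinity, for a sequence `c` along which the `i`-th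
entry is constant from `j = i + 1` on. -/
def branch (c : ℕ → ℕ → ℕ) (n : ℕ) (x : ℕ → Bool) : ℕ → ℕ := fun i => face c (i + 1) n x i

lemma branch_congr (h : ∀ i ≥ n, x i = y i) : branch c n x = branch c n y :=
  funext fun i => by rw [branch, branch, face_congr h]

lemma continuous_branch (c : ℕ → ℕ → ℕ) (n : ℕ) : Continuous (branch c n) :=
  continuous_pi fun i => (continuous_apply i).comp (continuous_face c (i + 1) n)

lemma face_apply_eq_branch (hc : ∀ j n x, face c (j + 1) n x ∈ cylinder (face c j n x) j)
    {i : ℕ} (hij : i < j) : face c j n x i = branch c n x i := by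
  induction j, hij using Nat.le_induction with
  | base => rfl
  | succ j hij ih => rw [hc j n x i hij, ih]

lemma slot_branch (hc : ∀ j n x, face c (j + 1) n x ∈ cylinder (face c j n x) j)
    (n : ℕ) (x : ℕ → Bool) : slot (x n).toNat (branch c (n + 1) x) = branch c n x := by
  funext i
  rw [← face_apply_eq_branch hc (j := 3 * i + (x n).toNat + 2) (by lia), face]
  rfl

lemma branch_mem (hc : ∀ j n x, face c (j + 1) n x ∈ cylinder (face c j n x) j)
    (hface : ∀ j, face c j n x ∈ Q n) (hQ : IsClosed (Q n)) : branch c n x ∈ Q n := by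
  have hlim : Tendsto (fun j => face c j n x) atTop (𝓝 (branch c n x)) :=
    tendsto_pi_nhds.2 fun i => tendsto_const_nhds.congr' <|
      (eventually_gt_atTop i).mono fun j hj => (face_apply_eq_branch hc hj).symm
  exact hQ.mem_of_tendsto hlim (.of_forall hface)

lemma vertex_branch {X : Type*} {π : (ℕ → ℕ) → X}
    (hc : ∀ n x, slot (x n).toNat (branch c (n + 1) x) = branch c n x) (n : ℕ) (x : ℕ → Bool) :
    vertex π n x (branch c n x) = π (branch c 0 x) := by
  induction n with
  | zero => rfl
  | succ n ih => rw [vertex, hc, ih]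

end Branch

end CubeCode

open CubeCode in
theorem isSigmaIndependent_univ_or_exists_continuous_gZero {X : Type*} [TopologicalSpace X]
    [PolishSpace X] [MeasurableSpace X] [BorelSpace X] {G : SetRel X X} (hG : AnalyticSet G)
    (s : ℕ → ℕ → Bool) :
    IsSigmaIndependent G univ ∨
      ∃ ψ : (ℕ → Bool) → X, Continuous ψ ∧ ∀ p ∈ gZero s, (ψ p.1, ψ p.2) ∈ G := by
  rw [or_iff_not_imp_left]
  intro h
  obtain ⟨f, hf, rfl⟩ : ∃ f : (ℕ → ℕ) → X × X, Continuous f ∧ range f = G := by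
    rw [AnalyticSet] at hG
    refine hG.resolve_left fun hempty => h ?_
    exact .of_isIndependentSet .univ fun x _ y _ hxy => by simp [hempty] at hxy
  have : Nonempty X := (isEmpty_or_nonempty X).resolve_left fun _ =>
    h (.of_isIndependentSet .univ fun x => isEmptyElim x)
  obtain ⟨π, hπ, hπ'⟩ := PolishSpace.exists_nat_nat_continuous_surjective X
  obtain ⟨Q, hclosed, hne, hdouble, hcyl⟩ := exists_seq_subset_double hπ hπ' hf h s
  choose c hc using hne
  have hface := face_mem hc fun n h hh => Bool.forall_bool.2 ⟨(hdouble n hh).1, (hdouble n hh).2.1⟩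
  have hstable (j n x) : face c (j + 1) n x ∈ cylinder (face c j n x) j :=
    cylinder_anti _ (by nlinarith [Nat.one_le_pow n 3 (by simp)])
      (face_succ_mem_cylinder hface hcyl j n x)
  have hslot := slot_branch hstable
  refine ⟨fun x => π (branch c 0 x), hπ.comp (continuous_branch c 0), ?_⟩
  rintro _ ⟨k, x, hx, rfl⟩
  have hxs (b : Bool) : update x k b ∈ cylinder (s k) k := fun i hi =>
    (update_of_ne hi.ne ..).trans (hx i hi)
  have hend (b : Bool) : vertex π k (s k) (slot b.toNat (branch c (k + 1) x)) =
      π (branch c 0 (update x k b)) := by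
    have htail : branch c (k + 1) x = branch c (k + 1) (update x k b) :=
      branch_congr fun i hi => (update_of_ne (Nat.ne_of_gt hi) ..).symm
    have hk := hslot k (update x k b)
    rw [update_self] at hk
    rw [← vertex_branch (π := π) hslot k, vertex_congr (hxs b), htail, hk]
  have hedge := (hdouble k (branch_mem hstable (fun j => hface j (k + 1) x) (hclosed _))).2.2
  exact ⟨_, hedge.trans (Prod.ext (hend false) (hend true))⟩

section FiberGraph

variable {X Y : Type*} {E : X → X → Prop} {θ : X → Y}

/-- The graph `D \ E`, for `D` the equivalence relation whose classes are the fibres of `θ`. -/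
def fiberGraph (E : X → X → Prop) (θ : X → Y) : SetRel X X :=
  {p | θ p.1 = θ p.2 ∧ ¬ E p.1 p.2}

lemma isSigmaIndependent_fiberGraph_of_continuous [TopologicalSpace X] [PolishSpace X]
    [MeasurableSpace X] [BorelSpace X] [TopologicalSpace Y] [T2Space Y] (hE : Equivalence E)
    (hEm : MeasurableSet {p : X × X | E p.1 p.2}) (hθ : Continuous θ)
    (hindex : ∀ x, ∃ D : Set X, D.Countable ∧ ∀ y, θ x = θ y → ∃ d ∈ D, E y d) :
    IsSigmaIndependent (fiberGraph E θ) univ := by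
  have hG : MeasurableSet (fiberGraph E θ) :=
    (isClosed_eq (hθ.comp continuous_fst) (hθ.comp continuous_snd)).measurableSet.inter hEm.compl
  obtain ⟨s, hs⟩ := exists_seq_frequently_mem_cylinder
  refine (isSigmaIndependent_univ_or_exists_continuous_gZero hG.analyticSet s).resolve_right ?_
  rintro ⟨ψ, hψ, hedge⟩
  have hconst := eq_of_continuous_of_gZero (hθ.comp hψ) fun p hp => (hedge p hp).1
  let z₀ : ℕ → Bool := fun _ => false
  obtain ⟨D, hD, hcover⟩ := hindex (ψ z₀)
  have hmeagre : ∀ d ∈ D, IsMeagre (ψ ⁻¹' {x | E x d}) := fun d _ =>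
    isMeagre_of_isIndependentSet_gZero hs
      (hψ.measurable (hEm.preimage measurable_prodMk_right)).baireMeasurableSet
      fun _ hz _ hz' hzz' => (hedge _ hzz').2 (hE.trans hz (hE.symm hz'))
  refine not_isMeagre_of_isOpen isOpen_univ univ_nonempty
    ((isMeagre_biUnion hD hmeagre).mono fun z _ => ?_)
  obtain ⟨d, hd, hzd⟩ := hcover (ψ z) (hconst z₀ z)
  exact mem_biUnion hd hzd

variable [MeasurableSpace X] [StandardBorelSpace X]

lemma isSigmaIndependent_fiberGraph [MeasurableSpace Y] [TopologicalSpace Y] [T2Space Y]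
    [SecondCountableTopology Y] [OpensMeasurableSpace Y] (hE : Equivalence E)
    (hEm : MeasurableSet {p : X × X | E p.1 p.2}) (hθ : Measurable θ)
    (hindex : ∀ x, ∃ D : Set X, D.Countable ∧ ∀ y, θ x = θ y → ∃ d ∈ D, E y d) :
    IsSigmaIndependent (fiberGraph E θ) univ := by
  let := upgradeStandardBorel X
  have hX : PolishSpace X := inferInstance
  have hXborel := BorelSpace.measurable_eq (α := X)
  obtain ⟨t, ht, hcont, hpolish⟩ := hθ.exists_continuous
  have hborel : @BorelSpace X t _ :=
    @BorelSpace.mk X t _ (hXborel.trans (borel_eq_borel_of_le hpolish hX ht).symm)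
  exact @isSigmaIndependent_fiberGraph_of_continuous X Y E θ t _ _ _ _ _ hE hEm hcont hindex

lemma exists_measurableSet_saturated_of_isIndependentSet [MeasurableSpace Y] [MeasurableEq Y]
    {C : Set X} (hE : Equivalence E) (hEm : MeasurableSet {p : X × X | E p.1 p.2})
    (hθ : Measurable θ) (hC : MeasurableSet C) (hind : IsIndependentSet (fiberGraph E θ) C) :
    ∃ U, C ⊆ U ∧ MeasurableSet U ∧ (∀ x y, θ x = θ y → E x y → (x ∈ U ↔ y ∈ U)) ∧
      ∀ x ∈ C, ∀ y ∈ U, θ x = θ y → E x y := by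
  let := upgradeStandardBorel X
  have hD : MeasurableSet {p : X × X | θ p.1 = θ p.2} :=
    measurableSet_eq_fun (hθ.comp measurable_fst) (hθ.comp measurable_snd)
  have hG : MeasurableSet (fiberGraph E θ) := hD.inter hEm.compl
  obtain ⟨U, hCU, hU, hUC, hR⟩ := exists_measurableSet_image_subset
    (R := {p : X × X | θ p.1 = θ p.2 ∧ E p.1 p.2}) (hD.inter hEm).analyticSet hC.analyticSet
    (analyticSet_relImage hG.analyticSet hC.analyticSet)
    (fun y ⟨y', ⟨x, hx, hxy, hxy'⟩, hy, hy'⟩ =>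
      ⟨x, hx, hxy.trans hy.symm, fun h => hxy' (hE.trans h hy')⟩)
    (isIndependentSet_iff_disjoint_image.1 hind)
  refine ⟨U, hCU, hU, fun x y hxy hxy' => ⟨fun hx => hR ⟨x, hx, hxy, hxy'⟩,
    fun hy => hR ⟨y, hy, hxy.symm, hE.symm hxy'⟩⟩, fun x hx y hy hxy => ?_⟩
  by_contra hxy'
  exact disjoint_left.1 hUC hy ⟨x, hx, hxy, hxy'⟩

lemma exists_measurable_eq_iff_of_isSigmaIndependent {θ : X → ℕ → Bool} (hE : Equivalence E)
    (hEm : MeasurableSet {p : X × X | E p.1 p.2}) (hθ : Measurable θ)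
    (h : IsSigmaIndependent (fiberGraph E θ) univ) :
    ∃ g : X → ℕ → Bool, Measurable g ∧ ∀ x y, (θ x = θ y ∧ E x y) ↔ g x = g y := by
  obtain ⟨𝒮, h𝒮, hC, hcover⟩ := h
  choose U hCU hU hsat hsep using fun C : 𝒮 =>
    exists_measurableSet_saturated_of_isIndependentSet hE hEm hθ (hC C C.2).1 (hC C C.2).2
  have : Countable 𝒮 := h𝒮
  let Z := (ℕ → Bool) × (𝒮 → Prop)
  let ρ (x : X) : Z := (θ x, fun C => x ∈ U C)
  have hρ : Measurable ρ := hθ.prodMk (measurable_pi_lambda _ fun C => measurable_mem.2 (hU C))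
  refine ⟨MeasurableSpace.mapNatBool Z ∘ ρ, (MeasurableSpace.measurable_mapNatBool Z).comp hρ,
    fun x y => ?_⟩
  rw [comp_apply, comp_apply, (MeasurableSpace.injective_mapNatBool Z).eq_iff, Prod.mk_inj]
  refine and_congr_right fun hxy => ⟨fun hxy' => funext fun C => propext (hsat C x y hxy hxy'),
    fun hmem => ?_⟩
  obtain ⟨C, hC, hxC⟩ := mem_sUnion.1 (hcover ▸ mem_univ x)
  exact hsep ⟨C, hC⟩ x hxC y ((congrFun hmem ⟨C, hC⟩).mp (hCU ⟨C, hC⟩ hxC)) hxy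

end FiberGraph

theorem statement15_general {X X' : Type*} [MeasurableSpace X] [StandardBorelSpace X]
    [MeasurableSpace X'] [MeasurableSpace.CountablySeparated X'] {E : X → X → Prop}
    (hE : Equivalence E) (hEm : MeasurableSet {p : X × X | E p.1 p.2}) {φ : X → X'}
    (hφ : Measurable φ)
    (hindex : ∀ x, ∃ D : Set X, D.Countable ∧ ∀ y, φ x = φ y → ∃ d ∈ D, E y d) :
    ∃ g : X → (ℕ → Bool), Measurable g ∧ ∀ x y, (φ x = φ y ∧ E x y) ↔ g x = g y := by
  obtain ⟨ι, hι, hinj⟩ := MeasurableSpace.measurable_injection_nat_bool_of_countablySeparated X'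
  have hfiber (x y : X) : ι (φ x) = ι (φ y) ↔ φ x = φ y := hinj.eq_iff
  have hindex' : ∀ x, ∃ D : Set X, D.Countable ∧ ∀ y, (ι ∘ φ) x = (ι ∘ φ) y → ∃ d ∈ D, E y d := by
    simpa only [comp_apply, hfiber] using hindex
  have hcolour := isSigmaIndependent_fiberGraph hE hEm (hι.comp hφ) hindex'
  simpa only [comp_apply, hfiber] using
    exists_measurable_eq_iff_of_isSigmaIndependent hE hEm (hι.comp hφ) hcolour

/-- Let `E ⊆ F` be Borel equivalence relations with `E` of countable
index in `F`, let `φ` be a Borel reduction of `F` to a countable equivalence relation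
`F'` on a Polish space `X'`, and let `D = (φ × φ)⁻¹(=)`. Then `D ∩ E` is smooth. -/
theorem statement15 {X X' : Type*} [TopologicalSpace X] [PolishSpace X]
    [MeasurableSpace X] [BorelSpace X]
    [TopologicalSpace X'] [PolishSpace X'] [MeasurableSpace X'] [BorelSpace X']
    (E F : X → X → Prop) (hE : Equivalence E) (hF : Equivalence F)
    (hEBorel : MeasurableSet {p : X × X | E p.1 p.2})
    (hFBorel : MeasurableSet {p : X × X | F p.1 p.2})
    (hEF : ∀ x y, E x y → F x y)
    (hindex : ∀ x : X, ∃ D : Set X, D.Countable ∧ ∀ y, F x y → ∃ d ∈ D, E y d)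
    (F' : X' → X' → Prop) (hF' : Equivalence F')
    (hF'count : ∀ y : X', {z : X' | F' y z}.Countable)
    (φ : X → X') (hφ : Measurable φ)
    (hred : ∀ x y, F x y ↔ F' (φ x) (φ y)) :
    ∃ g : X → (ℕ → Bool), Measurable g ∧
      ∀ x y, (φ x = φ y ∧ E x y) ↔ g x = g y :=
  statement15_general hE hEBorel hφ fun x => (hindex x).imp fun _ ⟨hD, h⟩ =>
    ⟨hD, fun y hxy => h y ((hred x y).2 (hxy ▸ hF'.refl _))⟩
end

section
/- Let X be a Polish space, A ⊆ X an analytic set, E a Borel equivalence relation on X, G an acyclic Borel graph on X whose connected components are the E-classes, and n a natural number such that for every x ∈ A there is a countable set C contained in the E-class of x which is complete with respect to the relation G^{≤n} restricted to A ∩ [x]_E (i.e., every point of A ∩ [x]_E is joined by a G-path of length at most n to a point of C). Then, assuming the case n = 0 and the inductive machinery (reflection and Lusin–Novikov), there is a Borel set B ⊆ X such that every point of A is joined by a G-path of length at most n to a point of B, and E restricted to B has all classes countable. In particular, prove the base case n = 0: if for every x ∈ A the set A ∩ [x]_E itself is countable, then there is a Borel set B ⊇ A on which E has all classes countable. -/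
open Set

open MeasureTheory Topology TopologicalSpace

/-!
Write `n = j + k`, where the balls of radius `j` in `G` meet `A` in countable sets. If `k = 0`, then
`A` meets every `E`-class in a countable set, and separation of analytic sets (reflection) enlarges
`A` to a Borel set with the same property.

If `k > 0`, let `U` be the set of points whose ball of radius `j + 1` meets `A` in an uncountable
set; it is analytic by the Mazurkiewicz–Sierpiński theorem. Let `y ∈ U`, let `c` be one of the
countably many points covering the class of `y`, and let `z` be the neighbor of `y` towards `c`. A
point of `A` at distance `j + 1` from `y` lies in the ball of radius `j` around `z`, which happens
only countably often, or its path to `c` passes through `y`. Hence some point covered by some `c`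
has its path to `c` pass through `y`, and then `c` is within `k - 1` of `y`. By induction, starting
again from radius `0`, a Borel set `B₁` with countable classes covers `U` with radius `k - 1`. The
points of `A` farther than `n` from `B₁` form an analytic set by the Lusin–Novikov theorem, and it
meets the balls of radius `j + 1` in countable sets, so the induction applies to it with `j + 1`
and `k - 1`.

For the Lusin–Novikov theorem, call a set negligible if countably many Borel sets on which `f` is
injective cover it. Starting from a non-negligible analytic set, one builds a Cantor scheme in which
the sets of each level share a value of `f`, even after a negligible set is discarded; it
converges to a perfect subset of a single fiber.
-/

section AnalyticSets

variable {α β : Type*} [TopologicalSpace α] [TopologicalSpace β]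

theorem analyticSet_inter [T2Space α] {s t : Set α} (hs : AnalyticSet s) (ht : AnalyticSet t) :
    AnalyticSet (s ∩ t) := by
  rw [inter_eq_iInter]
  exact AnalyticSet.iInter (Bool.forall_bool.2 ⟨ht, hs⟩)

theorem analyticSet_preimage [PolishSpace α] [T2Space β] {s : Set β} (hs : AnalyticSet s)
    {f : α → β} (hf : Continuous f) : AnalyticSet (f ⁻¹' s) := by
  rw [AnalyticSet] at hs
  obtain rfl | ⟨g, hg, rfl⟩ := hs
  · exact analyticSet_empty
  · have hgraph : IsClosed {p : α × (ℕ → ℕ) | f p.1 = g p.2} :=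
      isClosed_eq (hf.comp continuous_fst) (hg.comp continuous_snd)
    convert hgraph.analyticSet.image_of_continuous continuous_fst using 1
    ext x
    simp [eq_comm]

variable [PolishSpace α] [MeasurableSpace α] [BorelSpace α]

theorem exists_measurableSet_superset_biInter_disjoint {ι : Type*} (s : Finset ι)
    {S : ι → Set α} (hS : ∀ i, AnalyticSet (S i)) {T : Set α} (hT : AnalyticSet T)
    (hdisj : Disjoint T (⋂ i ∈ s, S i)) :
    ∃ M : ι → Set α, (∀ i, MeasurableSet (M i)) ∧ (∀ i, S i ⊆ M i) ∧
      Disjoint T (⋂ i ∈ s, M i) := by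
  classical
  induction s using Finset.induction_on generalizing T with
  | empty => exact ⟨fun _ => univ, fun _ => .univ, fun _ => subset_univ _, by simpa using hdisj⟩
  | insert i s hi ih =>
    rw [Finset.set_biInter_insert] at hdisj
    obtain ⟨M, hM, hSM, hMT⟩ := ih (analyticSet_inter hT (hS i)) (disjoint_assoc.2 hdisj)
    have hrest : AnalyticSet (T ∩ ⋂ j ∈ s, M j) :=
      analyticSet_inter hT (Finset.measurableSet_biInter s fun j _ => hM j).analyticSet
    obtain ⟨B, hSB, hBT, hB⟩ := (hS i).measurablySeparable hrest
      (disjoint_left_comm.1 (disjoint_assoc.1 hMT))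
    refine ⟨Function.update M i B, (Function.forall_update_iff M fun _ => MeasurableSet).2
      ⟨hB, fun j _ => hM j⟩, (Function.forall_update_iff M fun j => (S j ⊆ ·)).2
      ⟨hSB, fun j _ => hSM j⟩, ?_⟩
    rw [Finset.set_biInter_insert_update _ hi]
    exact disjoint_left.2 fun x hxT hx => disjoint_left.1 hBT ⟨hxT, hx.2⟩ hx.1

theorem exists_measurableSet_superset_iInter_eq_empty {ι : Type*} [Finite ι] {S : ι → Set α}
    (hS : ∀ i, AnalyticSet (S i)) (hempty : ⋂ i, S i = ∅) :
    ∃ M : ι → Set α, (∀ i, MeasurableSet (M i)) ∧ (∀ i, S i ⊆ M i) ∧ ⋂ i, M i = ∅ := by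
  have := Fintype.ofFinite ι
  obtain ⟨M, hM, hSM, hMempty⟩ := exists_measurableSet_superset_biInter_disjoint Finset.univ hS
    MeasurableSet.univ.analyticSet (by simp [hempty])
  exact ⟨M, hM, hSM, by simpa using hMempty⟩

theorem measurable_of_analyticSet_preimage_singleton {ι : Type*} [Countable ι]
    [MeasurableSpace ι] {f : α → ι} (hf : ∀ i, AnalyticSet (f ⁻¹' {i})) : Measurable f := by
  refine measurable_to_countable' fun i => (hf i).measurableSet_of_compl ?_
  have hcompl : (f ⁻¹' {i})ᶜ = ⋃ j : {j // j ≠ i}, f ⁻¹' {j.1} := by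
    ext x
    simp
  rw [hcompl]
  exact AnalyticSet.iUnion fun j => hf j

variable [PolishSpace β] [MeasurableSpace β] [BorelSpace β]

theorem exists_measurableSet_superset_prod_disjoint {R : Set (α × β)} (hR : MeasurableSet R)
    {P : Set α} (hP : AnalyticSet P) {Q : Set β} (hQ : AnalyticSet Q)
    (hdisj : Disjoint (P ×ˢ Q) R) :
    ∃ P' Q', MeasurableSet P' ∧ MeasurableSet Q' ∧ P ⊆ P' ∧ Q ⊆ Q' ∧ Disjoint (P' ×ˢ Q') R := by
  have hsnd : AnalyticSet (Prod.fst '' (R ∩ Prod.snd ⁻¹' Q)) :=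
    (analyticSet_inter hR.analyticSet
      (analyticSet_preimage hQ continuous_snd)).image_of_continuous continuous_fst
  obtain ⟨P', hPP', hP'Q, hP'⟩ := hP.measurablySeparable hsnd <| disjoint_left.2 <| by
    rintro x hx ⟨p, ⟨hpR, hpQ⟩, rfl⟩
    exact disjoint_left.1 hdisj ⟨hx, hpQ⟩ hpR
  have hfst : AnalyticSet (Prod.snd '' (R ∩ Prod.fst ⁻¹' P')) :=
    (hR.inter (measurable_fst hP')).analyticSet.image_of_continuous continuous_snd
  obtain ⟨Q', hQQ', hQ'P', hQ'⟩ := hQ.measurablySeparable hfst <| disjoint_left.2 <| by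
    rintro y hy ⟨p, ⟨hpR, hpP'⟩, rfl⟩
    exact disjoint_left.1 hP'Q ⟨p, ⟨hpR, hy⟩, rfl⟩ hpP'
  refine ⟨P', Q', hP', hQ', hPP', hQQ', disjoint_left.2 fun p hp hpR => ?_⟩
  exact disjoint_left.1 hQ'P' ⟨p, ⟨hpR, hp.1⟩, rfl⟩ hp.2

theorem exists_measurableSet_superset_injOn {γ : Type*} [MeasurableSpace γ]
    [MeasurableEq γ] {f : α → γ} (hf : Measurable f) {Q : Set α} (hQ : AnalyticSet Q)
    (hinj : InjOn f Q) :
    ∃ B, MeasurableSet B ∧ Q ⊆ B ∧ InjOn f B := by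
  have hR : MeasurableSet {p : α × α | f p.1 = f p.2 ∧ p.1 ≠ p.2} :=
    (measurableSet_eq_fun (by fun_prop) (by fun_prop)).inter
      (measurableSet_eq_fun measurable_fst measurable_snd).compl
  obtain ⟨P, P', hP, hP', hQP, hQP', hdisj⟩ :=
    exists_measurableSet_superset_prod_disjoint hR hQ hQ <| disjoint_left.2 fun p hp hpR =>
      hpR.2 (hinj hp.1 hp.2 hpR.1)
  refine ⟨P ∩ P', hP.inter hP', subset_inter hQP hQP', fun x hx y hy hxy => ?_⟩
  by_contra hne
  exact disjoint_left.1 hdisj (mk_mem_prod hx.1 hy.2) ⟨hxy, hne⟩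

end AnalyticSets

section CountablyInjective

variable {α β ι : Type*} [MeasurableSpace α] {f : α → β}

/-- `V` is covered by countably many measurable sets on each of which `f` is injective. For
analytic `V` this turns out to be equivalent to countability of the fibers of `f` on `V`. -/
def CountablyInjOn (f : α → β) (V : Set α) : Prop :=
  ∃ B : ℕ → Set α, (∀ k, MeasurableSet (B k)) ∧ (∀ k, InjOn f (B k)) ∧ V ⊆ ⋃ k, B k

namespace CountablyInjOn

theorem of_injOn {B : Set α} (hB : MeasurableSet B) (hf : InjOn f B) : CountablyInjOn f B :=
  ⟨fun _ => B, fun _ => hB, fun _ => hf, subset_iUnion (fun _ : ℕ => B) 0⟩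

theorem mono {V W : Set α} (hW : CountablyInjOn f W) (hVW : V ⊆ W) : CountablyInjOn f V :=
  let ⟨B, hB, hf, hWB⟩ := hW
  ⟨B, hB, hf, hVW.trans hWB⟩

theorem iUnion {κ : Type*} [Countable κ] {V : κ → Set α} (hV : ∀ a, CountablyInjOn f (V a)) :
    CountablyInjOn f (⋃ a, V a) := by
  obtain hκ | hκ := isEmpty_or_nonempty κ
  · simpa using of_injOn MeasurableSet.empty (injOn_empty f)
  choose B hB hf hVB using hV
  obtain ⟨e, he⟩ := exists_surjective_nat (κ × ℕ)
  refine ⟨fun k => B (e k).1 (e k).2, fun k => hB _ _, fun k => hf _ _, ?_⟩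
  rw [he.iUnion_comp fun p : κ × ℕ => B p.1 p.2, iUnion_prod']
  exact iUnion_mono hVB

theorem union {V W : Set α} (hV : CountablyInjOn f V) (hW : CountablyInjOn f W) :
    CountablyInjOn f (V ∪ W) := by
  rw [union_eq_iUnion]
  exact iUnion (Bool.forall_bool.2 ⟨hW, hV⟩)

theorem exists_measurableSet_superset {V : Set α} (hV : CountablyInjOn f V) :
    ∃ W, MeasurableSet W ∧ V ⊆ W ∧ CountablyInjOn f W :=
  let ⟨B, hB, hf, hVB⟩ := hV
  ⟨⋃ k, B k, .iUnion hB, hVB, B, hB, hf, Subset.rfl⟩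

theorem countable_inter_fiber {V : Set α} (hV : CountablyInjOn f V) (z : β) :
    (V ∩ f ⁻¹' {z}).Countable := by
  obtain ⟨B, -, hf, hVB⟩ := hV
  have hsub : V ∩ f ⁻¹' {z} ⊆ ⋃ k, B k ∩ f ⁻¹' {z} := by
    rw [← iUnion_inter]
    exact inter_subset_inter_left _ hVB
  refine (countable_iUnion fun k => Subsingleton.countable ?_).mono hsub
  exact fun x hx y hy => hf k hx.1 hy.1 (hx.2.trans hy.2.symm)

end CountablyInjOn

/-- The sets `Q i` have a common value of `f`, and still do after discarding from all of them any
set that is negligible in the sense of `CountablyInjOn`. -/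
def JointlyThick (f : α → β) (Q : ι → Set α) : Prop :=
  ∀ V, CountablyInjOn f V → ∃ z, ∀ i, ∃ a ∈ Q i \ V, f a = z

namespace JointlyThick

theorem comp {Q : ι → Set α} (hQ : JointlyThick f Q) {κ : Type*} (e : κ → ι) :
    JointlyThick f (Q ∘ e) := by
  intro V hV
  obtain ⟨z, hz⟩ := hQ V hV
  exact ⟨z, fun i => hz (e i)⟩

theorem mono {Q Q' : ι → Set α} (hQ : JointlyThick f Q) (hQQ' : ∀ i, Q i ⊆ Q' i) :
    JointlyThick f Q' := by
  intro V hV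
  obtain ⟨z, hz⟩ := hQ V hV
  exact ⟨z, fun i => (hz i).imp fun a ha => ⟨sdiff_subset_sdiff_left (hQQ' i) ha.1, ha.2⟩⟩

theorem sdiff {Q : ι → Set α} (hQ : JointlyThick f Q) {V : Set α} (hV : CountablyInjOn f V) :
    JointlyThick f fun i => Q i \ V := by
  intro W hW
  simpa only [sdiff_sdiff] using hQ (V ∪ W) (hV.union hW)

end JointlyThick

variable [TopologicalSpace α] [PolishSpace α] [BorelSpace α] [TopologicalSpace β]

theorem analyticSet_setOf_nontrivial_inter_fiber [T2Space β] (hf : Continuous f)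
    {Q : Set α} (hQ : AnalyticSet Q) : AnalyticSet {z | (Q ∩ f ⁻¹' {z}).Nontrivial} := by
  have hpairs : AnalyticSet (Prod.fst ⁻¹' Q ∩ Prod.snd ⁻¹' Q ∩
      {p : α × α | f p.1 = f p.2 ∧ p.1 ≠ p.2}) :=
    analyticSet_inter (analyticSet_inter (analyticSet_preimage hQ continuous_fst)
      (analyticSet_preimage hQ continuous_snd)) <| MeasurableSet.analyticSet <|
      (isClosed_eq (hf.comp continuous_fst) (hf.comp continuous_snd)).measurableSet.inter
        (measurableSet_eq_fun measurable_fst measurable_snd).compl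
  convert hpairs.image_of_continuous (hf.comp continuous_fst) using 1
  ext z
  constructor
  · rintro ⟨x, ⟨hx, rfl⟩, y, ⟨hy, hyx⟩, hne⟩
    exact ⟨(x, y), ⟨⟨hx, hy⟩, hyx.symm, hne⟩, rfl⟩
  · rintro ⟨⟨x, y⟩, ⟨⟨hx, hy⟩, hxy, hne⟩, rfl⟩
    exact ⟨x, ⟨hx, rfl⟩, y, ⟨hy, hxy.symm⟩, hne⟩

variable [PolishSpace β] [MeasurableSpace β] [BorelSpace β]

/-- If no fiber met all the `Q i` in at least two points, Novikov separation of the sets of values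
with two preimages in `Q i` would split off from each `Q i` a part on which `f` is injective. -/
theorem JointlyThick.exists_forall_nontrivial_inter_fiber [Finite ι] (hf : Continuous f)
    {Q : ι → Set α} (hQ : ∀ i, AnalyticSet (Q i)) (hthick : JointlyThick f Q) :
    ∃ z, ∀ i, (Q i ∩ f ⁻¹' {z}).Nontrivial := by
  by_contra! hcon
  obtain ⟨M, hM, hSM, hMempty⟩ := exists_measurableSet_superset_iInter_eq_empty
    (fun i => analyticSet_setOf_nontrivial_inter_fiber hf (hQ i)) <| by
      refine eq_empty_of_forall_notMem fun z hz => ?_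
      obtain ⟨i, hi⟩ := hcon z
      exact hi.not_nontrivial (mem_iInter.1 hz i)
  have hinj : ∀ i, InjOn f (Q i ∩ f ⁻¹' (M i)ᶜ) := fun i x hx y hy hxy =>
    of_not_not fun hne => hx.2 (hSM i ⟨x, ⟨hx.1, rfl⟩, y, ⟨hy.1, hxy.symm⟩, hne⟩)
  have hthin : ∀ i, CountablyInjOn f (Q i ∩ f ⁻¹' (M i)ᶜ) := fun i => by
    obtain ⟨B, hB, hQB, hBinj⟩ := exists_measurableSet_superset_injOn hf.measurable
      (analyticSet_inter (hQ i) (hf.measurable (hM i).compl).analyticSet) (hinj i)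
    exact (CountablyInjOn.of_injOn hB hBinj).mono hQB
  obtain ⟨z, hz⟩ := hthick _ (CountablyInjOn.iUnion hthin)
  refine eq_empty_iff_forall_notMem.1 hMempty z (mem_iInter.2 fun i => ?_)
  obtain ⟨x, ⟨hxQ, hxV⟩, rfl⟩ := hz i
  by_contra hxM
  exact hxV (mem_iUnion.2 ⟨i, hxQ, hxM⟩)

end CountablyInjective

section CantorScheme

theorem tendsto_of_forall_mem_cantorScheme {W γ : Type*} [PseudoMetricSpace W] {A : List γ → Set W}
    (hanti : CantorScheme.Antitone A) (hdiam : CantorScheme.VanishingDiam A) {x : ℕ → γ} {y : W}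
    (hy : ∀ k, y ∈ A (PiNat.res x k)) {w : ℕ → W} (hw : ∀ k, w k ∈ A (PiNat.res x k)) :
    Filter.Tendsto w Filter.atTop (𝓝 y) := by
  have hres : Antitone fun k => A (PiNat.res x k) := antitone_nat_of_succ_le fun k => hanti _ _
  refine Metric.tendsto_atTop.2 fun ε hε => ?_
  obtain ⟨N, hN⟩ := hdiam.dist_lt ε hε x
  exact ⟨N, fun k hk => hN _ (hres hk (hw k)) _ (hy N)⟩

theorem injective_of_forall_mem_cantorScheme {α γ : Type*} {A : List γ → Set α}
    (hA : CantorScheme.Disjoint A) {h : (ℕ → γ) → α} (hh : ∀ x k, h x ∈ A (PiNat.res x k)) :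
    Function.Injective h := by
  intro x y hxy
  refine PiNat.res_injective (funext fun k => ?_)
  induction k with
  | zero => simp only [PiNat.res_zero]
  | succ k ih =>
    have hx := hh x (k + 1)
    have hy := hh y (k + 1)
    rw [PiNat.res_succ, ← hxy, ← ih] at hy
    rw [PiNat.res_succ] at hx
    have hhead : x k = y k := of_not_not fun hne => disjoint_left.1 (hA _ hne) hx hy
    rw [PiNat.res_succ, PiNat.res_succ, ih, hhead]

variable {α β ι W : Type*} [MeasurableSpace α] {f : α → β} {g : W → α}

theorem exists_countablyInjOn_forall_jointlyThick_image [TopologicalSpace W]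
    [SecondCountableTopology W] (f : α → β) (g : W → α) (ι : Type*) [Finite ι] :
    ∃ V, MeasurableSet V ∧ CountablyInjOn f V ∧
      ∀ (w : ι → W) (z : β), (∀ i, f (g (w i)) = z) → (∀ i, g (w i) ∉ V) →
        ∀ U : ι → Set W, (∀ i, U i ∈ 𝓝 (w i)) → JointlyThick f fun i => g '' U i := by
  let κ := {b : ι → countableBasis W // ¬ JointlyThick f fun i => g '' (b i : Set W)}
  have hthin : ∀ b : κ, ∃ V, CountablyInjOn f V ∧
      ∀ z, ∃ i, ∀ a ∈ g '' (b.1 i : Set W) \ V, f a ≠ z := fun b => by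
    have hb := b.2
    unfold JointlyThick at hb
    push Not at hb
    exact hb
  choose V hV hVz using hthin
  obtain ⟨V', hV', hVV', hV'inj⟩ := (CountablyInjOn.iUnion hV).exists_measurableSet_superset
  refine ⟨V', hV', hV'inj, fun w z hwz hwV U hU => ?_⟩
  have hbasis : ∀ i, ∃ b : countableBasis W, w i ∈ (b : Set W) ∧ (b : Set W) ⊆ U i := fun i => by
    obtain ⟨b, hb, hwb, hbU⟩ := (isBasis_countableBasis W).mem_nhds_iff.1 (hU i)
    exact ⟨⟨b, hb⟩, hwb, hbU⟩
  choose b hwb hbU using hbasis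
  refine JointlyThick.mono (Q := fun i => g '' (b i : Set W)) ?_ fun i => image_mono (hbU i)
  by_contra hb
  obtain ⟨i, hi⟩ := hVz ⟨b, hb⟩ z
  refine hi (g (w i)) ⟨mem_image_of_mem g (hwb i), fun h => hwV i ?_⟩ (hwz i)
  exact hVV' (mem_iUnion.2 ⟨⟨b, hb⟩, h⟩)

theorem exists_isOpen_closure_subset_ediam_le [PseudoMetricSpace W] {w : W} {N : Set W}
    (hN : N ∈ 𝓝 w) {ε : ENNReal} (hε : ε ≠ 0) :
    ∃ U, IsOpen U ∧ w ∈ U ∧ closure U ⊆ N ∧ Metric.ediam U ≤ ε := by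
  obtain ⟨K, hK, hKclosed, hKN⟩ := exists_mem_nhds_isClosed_subset hN
  refine ⟨interior K ∩ Metric.eball w (ε / 2), isOpen_interior.inter Metric.isOpen_eball,
    ⟨mem_interior_iff_mem_nhds.2 hK, Metric.mem_eball_self (ENNReal.half_pos hε)⟩, ?_, ?_⟩
  · exact (hKclosed.closure_subset_iff.2 (inter_subset_left.trans interior_subset)).trans hKN
  · refine (Metric.ediam_mono inter_subset_right).trans (Metric.ediam_eball_le.trans_eq ?_)
    exact ENNReal.mul_div_cancel two_ne_zero ENNReal.ofNat_ne_top

variable [TopologicalSpace α] [PolishSpace α] [BorelSpace α]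
  [TopologicalSpace β] [PolishSpace β] [MeasurableSpace β] [BorelSpace β]

theorem JointlyThick.exists_image_nhds [TopologicalSpace W] [PolishSpace W] [Finite ι]
    (hf : Continuous f) (hg : Continuous g) {c : ι → Set W} (hc : ∀ i, IsOpen (c i))
    (hthick : JointlyThick f fun i => g '' c i) :
    ∃ w : Bool × ι → W, (∀ p, w p ∈ c p.2) ∧ (∀ i, g (w (true, i)) ≠ g (w (false, i))) ∧
      ∀ U : Bool × ι → Set W, (∀ p, U p ∈ 𝓝 (w p)) → JointlyThick f fun p => g '' U p := by
  obtain ⟨V, hV, hVinj, hVthick⟩ :=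
    exists_countablyInjOn_forall_jointlyThick_image f g (Bool × ι)
  have hanalytic : ∀ i, AnalyticSet (g '' c i \ V) := fun i =>
    analyticSet_inter ((hc i).analyticSet_image hg) hV.compl.analyticSet
  obtain ⟨z, hz⟩ := (hthick.sdiff hVinj).exists_forall_nontrivial_inter_fiber hf hanalytic
  choose a ha a' ha' hne using hz
  choose u hu hua using fun i => (ha i).1.1
  choose u' hu' hua' using fun i => (ha' i).1.1
  refine ⟨fun p => if p.1 then u p.2 else u' p.2, ?_, ?_, hVthick _ z ?_ ?_⟩
  · rintro ⟨_ | _, i⟩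
    exacts [hu' i, hu i]
  · intro i
    simpa [hua, hua'] using hne i
  · rintro ⟨_ | _, i⟩
    exacts [(congrArg f (hua' i)).trans (ha' i).2, (congrArg f (hua i)).trans (ha i).2]
  · rintro ⟨_ | _, i⟩
    exacts [hua' i ▸ (ha' i).1.2, hua i ▸ (ha i).1.2]

variable [MetricSpace W]

theorem JointlyThick.exists_refinement [PolishSpace W] [Finite ι] (hf : Continuous f)
    (hg : Continuous g) {c : ι → Set W} (hc : ∀ i, IsOpen (c i))
    (hthick : JointlyThick f fun i => g '' c i) {ε : ENNReal} (hε : ε ≠ 0) :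
    ∃ c' : Bool × ι → Set W, (∀ p, IsOpen (c' p)) ∧ (JointlyThick f fun p => g '' c' p) ∧
      (∀ p, closure (c' p) ⊆ c p.2) ∧ (∀ p, Metric.ediam (c' p) ≤ ε) ∧
      ∀ i, Disjoint (g '' c' (true, i)) (g '' c' (false, i)) := by
  obtain ⟨w, hwc, hne, hwthick⟩ := hthick.exists_image_nhds hf hg hc
  choose O O' hO hO' hwO hwO' hdisj using fun i => t2_separation (hne i)
  have hnhds : ∀ p : Bool × ι, (g ⁻¹' if p.1 then O p.2 else O' p.2) ∩ c p.2 ∈ 𝓝 (w p) := by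
    rintro ⟨_ | _, i⟩
    · exact Filter.inter_mem (((hO' i).preimage hg).mem_nhds (hwO' i))
        ((hc i).mem_nhds (hwc (false, i)))
    · exact Filter.inter_mem (((hO i).preimage hg).mem_nhds (hwO i))
        ((hc i).mem_nhds (hwc (true, i)))
  choose c' hc' hwc' hc'N hdiam using
    fun p => exists_isOpen_closure_subset_ediam_le (hnhds p) hε
  refine ⟨c', hc', hwthick c' fun p => (hc' p).mem_nhds (hwc' p),
    fun p => (hc'N p).trans inter_subset_right, hdiam, fun i => ?_⟩
  refine (hdisj i).mono ?_ ?_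
  · exact image_subset_iff.2 fun x hx => (hc'N (true, i) (subset_closure hx)).1
  · exact image_subset_iff.2 fun x hx => (hc'N (false, i) (subset_closure hx)).1

variable [CompleteSpace W] [SecondCountableTopology W]

theorem exists_cantorScheme_of_not_countablyInjOn (hf : Continuous f) (hg : Continuous g)
    (hrange : ¬ CountablyInjOn f (range g)) :
    ∃ A : List Bool → Set W, CantorScheme.ClosureAntitone A ∧ CantorScheme.VanishingDiam A ∧
      CantorScheme.Disjoint (fun l => g '' A l) ∧
      ∀ k, ∃ z, ∀ l : List Bool, l.length = k → ∃ w ∈ A l, f (g w) = z := by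
  let Level (k : ℕ) := {c : List.Vector Bool k → Set W //
    (∀ v, IsOpen (c v)) ∧ JointlyThick f fun v => g '' c v}
  have hstep : ∀ (k : ℕ) (c : Level k), ∃ c' : Level (k + 1),
      (∀ v, closure (c'.1 v) ⊆ c.1 v.tail) ∧
      (∀ v, Metric.ediam (c'.1 v) ≤ ((k + 1 : ℕ) : ENNReal)⁻¹) ∧
      ∀ v, Disjoint (g '' c'.1 (true ::ᵥ v)) (g '' c'.1 (false ::ᵥ v)) := by
    rintro k ⟨c, hc, hthick⟩
    obtain ⟨c', hc', hthick', hclosure, hdiam, hdisj⟩ :=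
      hthick.exists_refinement hf hg hc (ENNReal.inv_ne_zero.2 (ENNReal.natCast_ne_top (k + 1)))
    exact ⟨⟨fun v => c' (v.head, v.tail), fun v => hc' _,
      hthick'.comp fun v : List.Vector Bool (k + 1) => (v.head, v.tail)⟩,
      fun v => hclosure _, fun v => hdiam _, fun v => by simpa using hdisj v⟩
  choose next hclosure hdiam hdisj using hstep
  have hroot : JointlyThick f fun _ : List.Vector Bool 0 => g '' univ := by
    intro V hV
    obtain ⟨a, ha, haV⟩ := not_subset.1 fun h => hrange (hV.mono h)
    exact ⟨f a, fun _ => ⟨a, ⟨image_univ ▸ ha, haV⟩, rfl⟩⟩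
  let level : ∀ k, Level k := fun k => Nat.rec ⟨fun _ => univ, fun _ => isOpen_univ, hroot⟩ next k
  let A : List Bool → Set W := fun l => (level l.length).1 ⟨l, rfl⟩
  have hA : ∀ l, Metric.ediam (A l) ≤ (l.length : ENNReal)⁻¹
    | [] => by simp
    | b :: l => hdiam l.length (level l.length) ⟨b :: l, rfl⟩
  refine ⟨A, fun l b => hclosure l.length (level l.length) ⟨b :: l, rfl⟩, fun x => ?_,
    fun l => ?_, fun k => ?_⟩
  · refine tendsto_of_tendsto_of_tendsto_of_le_of_le tendsto_const_nhds
      ENNReal.tendsto_inv_nat_nhds_zero (fun _ => zero_le) fun k => ?_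
    simpa using hA (PiNat.res x k)
  · have hl := hdisj l.length (level l.length) ⟨l, rfl⟩
    rintro (_ | _) (_ | _) hne
    exacts [(hne rfl).elim, hl.symm, hl, (hne rfl).elim]
  · obtain ⟨z, hz⟩ := (level k).2.2 ∅ (CountablyInjOn.of_injOn .empty (injOn_empty f))
    refine ⟨z, ?_⟩
    rintro l rfl
    obtain ⟨_, ⟨⟨w, hw, rfl⟩, -⟩, hwz⟩ := hz ⟨l, rfl⟩
    exact ⟨w, hw, hwz⟩

theorem exists_not_countable_range_inter_fiber (hf : Continuous f) (hg : Continuous g)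
    (hrange : ¬ CountablyInjOn f (range g)) : ∃ z, ¬ (range g ∩ f ⁻¹' {z}).Countable := by
  obtain ⟨A, hclosure, hdiam, hdisj, hvalue⟩ :=
    exists_cantorScheme_of_not_countablyInjOn hf hg hrange
  choose z hz using hvalue
  have hne : ∀ l, (A l).Nonempty := fun l => let ⟨w, hw, _⟩ := hz l.length l rfl; ⟨w, hw⟩
  let φ : (ℕ → Bool) → W := fun x => (CantorScheme.inducedMap A).2
    ⟨x, hclosure.map_of_vanishingDiam hdiam hne ▸ mem_univ x⟩
  have hφ : ∀ x k, φ x ∈ A (PiNat.res x k) := fun x k => CantorScheme.map_mem _ k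
  have hlim : ∀ x, Filter.Tendsto z Filter.atTop (𝓝 (f (g (φ x)))) := fun x => by
    choose w hwA hwz using fun k => hz k (PiNat.res x k) (PiNat.res_length x k)
    have hw := tendsto_of_forall_mem_cantorScheme hclosure.antitone hdiam (hφ x) hwA
    exact ((hf.comp hg).continuousAt.tendsto.comp hw).congr hwz
  have hinj : Function.Injective (g ∘ φ) :=
    injective_of_forall_mem_cantorScheme hdisj fun x k => mem_image_of_mem g (hφ x k)
  have huncountable : Uncountable (ℕ → Bool) := by
    simp [← Cardinal.aleph0_lt_mk_iff, Cardinal.aleph0_lt_continuum]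
  refine ⟨f (g (φ fun _ => true)), fun hcount =>
    not_countable (α := ℕ → Bool) (countable_univ_iff.1 ?_)⟩
  refine MapsTo.countable_of_injOn (f := g ∘ φ) (fun x _ => ?_) hinj.injOn hcount
  exact ⟨mem_range_self _, tendsto_nhds_unique (hlim x) (hlim _)⟩

end CantorScheme

section CountableFibers

variable {α β : Type*}

theorem countable_inter_fst_fiber_iff {R : Set (α × β)} {z : α} :
    (R ∩ Prod.fst ⁻¹' {z}).Countable ↔ {y | (z, y) ∈ R}.Countable := by
  have himage : R ∩ Prod.fst ⁻¹' {z} = Prod.mk z '' {y | (z, y) ∈ R} := by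
    ext ⟨x, y⟩
    simp only [mem_inter_iff, mem_preimage, mem_singleton_iff, mem_image, mem_ofPred_eq,
      Prod.mk.injEq]
    grind
  rw [himage]
  exact ⟨countable_of_injective_of_countable_image (Prod.mk_right_injective z).injOn,
    fun h => h.image _⟩

variable [TopologicalSpace α] [PolishSpace α] [MeasurableSpace α] [BorelSpace α]
  [TopologicalSpace β] [PolishSpace β] [MeasurableSpace β] [BorelSpace β] {f : α → β}

theorem countablyInjOn_of_countable_inter_fiber (hf : Continuous f) {R : Set α}
    (hR : AnalyticSet R) (hcount : ∀ z, (R ∩ f ⁻¹' {z}).Countable) : CountablyInjOn f R := by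
  rw [AnalyticSet] at hR
  obtain rfl | ⟨g, hg, rfl⟩ := hR
  · exact .of_injOn .empty (injOn_empty f)
  · let := upgradeIsCompletelyMetrizable (ℕ → ℕ)
    by_contra hrange
    obtain ⟨z, hz⟩ := exists_not_countable_range_inter_fiber hf hg hrange
    exact hz (hcount z)

/-- The Lusin–Novikov theorem. -/
theorem measurableSet_image_of_countable_inter_fiber (hf : Continuous f) {S : Set α}
    (hS : MeasurableSet S) (hcount : ∀ z, (S ∩ f ⁻¹' {z}).Countable) :
    MeasurableSet (f '' S) := by
  obtain ⟨B, hB, hBinj, hSB⟩ :=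
    countablyInjOn_of_countable_inter_fiber hf hS.analyticSet hcount
  rw [← inter_eq_left.2 hSB, inter_iUnion, image_iUnion]
  exact .iUnion fun k => (hS.inter (hB k)).image_of_measurable_injOn hf.measurable
    ((hBinj k).mono inter_subset_right)

theorem exists_measurableSet_superset_countable_sections {R : Set (α × β)}
    (hR : MeasurableSet R) {A : Set β} (hA : AnalyticSet A)
    (hcount : ∀ x, {y ∈ A | (x, y) ∈ R}.Countable) :
    ∃ B, MeasurableSet B ∧ A ⊆ B ∧ ∀ x, {y ∈ B | (x, y) ∈ R}.Countable := by
  have hRA : AnalyticSet (R ∩ Prod.snd ⁻¹' A) :=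
    analyticSet_inter hR.analyticSet (analyticSet_preimage hA continuous_snd)
  have hsections : ∀ x, (R ∩ Prod.snd ⁻¹' A ∩ Prod.fst ⁻¹' {x}).Countable := fun x =>
    countable_inter_fst_fiber_iff.2 ((hcount x).mono fun y hy => And.symm hy)
  obtain ⟨V, hV, hRAV, hVinj⟩ := (countablyInjOn_of_countable_inter_fiber continuous_fst hRA
    hsections).exists_measurableSet_superset
  obtain ⟨P, B, -, hB, hP, hAB, hdisj⟩ := exists_measurableSet_superset_prod_disjoint
    (hR.diff hV) MeasurableSet.univ.analyticSet hA <| disjoint_left.2 fun p hp hpR =>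
      hpR.2 (hRAV ⟨hpR.1, hp.2⟩)
  refine ⟨B, hB, hAB, fun x => ?_⟩
  refine (countable_inter_fst_fiber_iff.1 (hVinj.countable_inter_fiber x)).mono fun y hy => ?_
  exact of_not_not fun hyV => disjoint_left.1 hdisj ⟨hP (mem_univ x), hy.1⟩ ⟨hy.2, hyV⟩

end CountableFibers

section MazurkiewiczSierpinski

variable {α β W : Type*} {g : W → α}

/-- Every term of the sequence `w` is a limit of terms at which `g` takes another value. Such a
sequence is a Borel-recognizable witness that `g` takes uncountably many values on its closure. -/
def IsSelfSplitting [TopologicalSpace W] (g : W → α) (w : ℕ → W) : Prop :=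
  ∀ k, w k ∈ closure {x ∈ range w | g x ≠ g (w k)}

/-- `T` consists of the points of `F` near which `g` still takes uncountably many values. -/
theorem exists_subset_forall_mem_closure_ne [TopologicalSpace W] [SecondCountableTopology W]
    {F : Set W} (hF : ¬ (g '' F).Countable) :
    ∃ T ⊆ F, T.Nonempty ∧ ∀ x ∈ T, x ∈ closure {x' ∈ T | g x' ≠ g x} := by
  let T := {x ∈ F | ∀ N ∈ 𝓝[F] x, ¬ (g '' N).Countable}
  have hthin : (g '' (F \ T)).Countable := by
    refine (HereditarilyLindelofSpace.isLindelof (F \ T)).induction_on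
      (p := fun s => (g '' s).Countable) (fun s t hst ht => ht.mono (image_mono hst))
      (fun S hS hcount => ?_) fun x hx => ?_
    · rw [sUnion_eq_biUnion, image_iUnion₂]
      exact hS.biUnion hcount
    · obtain ⟨N, hN, hNcount⟩ : ∃ N ∈ 𝓝[F] x, (g '' N).Countable := by
        by_contra! hcon
        exact hx.2 ⟨hx.1, hcon⟩
      exact ⟨N, nhdsWithin_mono x sdiff_subset hN, hNcount⟩
  refine ⟨T, sep_subset _ _, ?_, fun x hx => mem_closure_iff_nhds.2 fun U hU => ?_⟩
  · by_contra hT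
    rw [not_nonempty_iff_eq_empty.1 hT, sdiff_empty] at hthin
    exact hF hthin
  · by_contra hcon
    refine hx.2 (F ∩ U) (inter_mem_nhdsWithin F hU) ((hthin.insert (g x)).mono ?_)
    rintro _ ⟨x', ⟨hx'F, hx'U⟩, rfl⟩
    refine or_iff_not_imp_left.2 fun hne => mem_image_of_mem g ⟨hx'F, fun hx'T => ?_⟩
    exact hcon ⟨x', hx'U, hx'T, hne⟩

theorem exists_isSelfSplitting [TopologicalSpace W] [SecondCountableTopology W]
    [TopologicalSpace α] [T1Space α] (hg : Continuous g) {F : Set W}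
    (hF : ¬ (g '' F).Countable) : ∃ w : ℕ → W, (∀ k, w k ∈ F) ∧ IsSelfSplitting g w := by
  obtain ⟨T, hTF, hTne, hT⟩ := exists_subset_forall_mem_closure_ne hF
  have := hTne.to_subtype
  let w : ℕ → W := fun k => denseSeq T k
  have hdense : T ⊆ closure (range w) := by
    rw [range_comp' Subtype.val (denseSeq T)]
    exact Subtype.dense_iff.1 (denseRange_denseSeq T)
  refine ⟨w, fun k => hTF (denseSeq T k).2, fun k => ?_⟩
  have hopen : IsOpen {x | g x ≠ g (w k)} := isOpen_ne.preimage hg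
  have hsub : {x ∈ T | g x ≠ g (w k)} ⊆ closure {x ∈ range w | g x ≠ g (w k)} := fun x hx => by
    have := hopen.inter_closure ⟨hx.2, hdense hx.1⟩
    rwa [inter_comm] at this
  exact closure_minimal hsub isClosed_closure (hT (w k) (denseSeq T k).2)

theorem IsSelfSplitting.not_countable_image_closure [TopologicalSpace W] [PolishSpace W]
    [TopologicalSpace α] [T1Space α] (hg : Continuous g) {w : ℕ → W} (hw : IsSelfSplitting g w) :
    ¬ (g '' closure (range w)).Countable := by
  intro hcount
  have := (isClosed_closure (s := range w)).polishSpace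
  have hopen : ∀ y, IsOpen {x : closure (range w) | g x ≠ y} := fun y =>
    isOpen_ne.preimage (hg.comp continuous_subtype_val)
  have hdense : ∀ y, Dense {x : closure (range w) | g x ≠ y} := fun y => by
    refine Subtype.dense_iff.2 (closure_minimal ?_ isClosed_closure)
    rintro _ ⟨k, rfl⟩
    by_cases hk : g (w k) = y
    · refine closure_mono ?_ (hw k)
      rintro x ⟨hx, hxk⟩
      exact ⟨⟨x, subset_closure hx⟩, hk ▸ hxk, rfl⟩
    · exact subset_closure ⟨⟨w k, subset_closure (mem_range_self k)⟩, hk, rfl⟩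
  have : Nonempty (closure (range w)) := ⟨⟨w 0, subset_closure (mem_range_self 0)⟩⟩
  obtain ⟨x, hx⟩ := (dense_biInter_of_isOpen (fun y _ => hopen y) hcount
    fun y _ => hdense y).nonempty
  exact mem_iInter₂.1 hx (g x) (mem_image_of_mem g x.2) rfl

theorem measurableSet_setOf_isSelfSplitting [TopologicalSpace W] [SecondCountableTopology W]
    [MeasurableSpace W] [OpensMeasurableSpace W] [MeasurableSpace α] [MeasurableEq α]
    (hg : Measurable g) : MeasurableSet {w | IsSelfSplitting g w} := by
  have hiff : ∀ w, IsSelfSplitting g w ↔ ∀ (k : ℕ) (b : countableBasis W), w k ∈ (b : Set W) →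
      ∃ j, w j ∈ (b : Set W) ∧ g (w j) ≠ g (w k) := fun w => by
    refine forall_congr' fun k => ?_
    rw [(isBasis_countableBasis W).mem_closure_iff, Subtype.forall]
    refine forall₃_congr fun b hb _ => ?_
    constructor
    · rintro ⟨_, hxb, ⟨j, rfl⟩, hne⟩
      exact ⟨j, hxb, hne⟩
    · rintro ⟨j, hjb, hne⟩
      exact ⟨w j, hjb, mem_range_self j, hne⟩
  simp only [hiff]
  refine measurableSet_setOfPred.2 <| .forall fun k => .forall fun b => ?_
  have hb : MeasurableSet (b : Set W) :=
    ((isBasis_countableBasis W).isOpen b.2).measurableSet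
  refine (measurableSet_setOfPred.1 (measurable_pi_apply k hb)).imp <| .exists fun j => ?_
  refine (measurableSet_setOfPred.1 (measurable_pi_apply j hb)).and (measurableSet_setOfPred.1 ?_)
  exact (measurableSet_eq_fun (hg.comp (measurable_pi_apply j))
    (hg.comp (measurable_pi_apply k))).compl

/-- The Mazurkiewicz–Sierpiński theorem. -/
theorem analyticSet_setOf_not_countable_inter_fiber [TopologicalSpace α] [T2Space α]
    [SecondCountableTopology α] [TopologicalSpace β] [T2Space β] {f : α → β} (hf : Continuous f)
    {R : Set α} (hR : AnalyticSet R) : AnalyticSet {z | ¬ (R ∩ f ⁻¹' {z}).Countable} := by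
  rw [AnalyticSet] at hR
  obtain rfl | ⟨g, hg, rfl⟩ := hR
  · simpa using analyticSet_empty
  have hfg : Continuous (f ∘ g) := hf.comp hg
  let D : Set (ℕ → ℕ → ℕ) := (⋂ k, {w | f (g (w k)) = f (g (w 0))}) ∩ {w | IsSelfSplitting g w}
  have hD : MeasurableSet D := by
    borelize α
    refine .inter (.iInter fun k => ?_) (measurableSet_setOf_isSelfSplitting hg.measurable)
    exact (isClosed_eq (hfg.comp (continuous_apply k))
      (hfg.comp (continuous_apply 0))).measurableSet
  convert hD.analyticSet.image_of_continuous (hfg.comp (continuous_apply 0)) using 1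
  ext z
  constructor
  · intro hz
    rw [mem_ofPred_eq, ← image_univ, ← image_inter_preimage, univ_inter] at hz
    obtain ⟨w, hwz, hw⟩ := exists_isSelfSplitting hg hz
    exact ⟨w, ⟨mem_iInter.2 fun k => (hwz k).trans (hwz 0).symm, hw⟩, hwz 0⟩
  · rintro ⟨w, ⟨hwz, hw⟩, rfl⟩ hcount
    refine hw.not_countable_image_closure hg (hcount.mono (image_subset_iff.2 ?_))
    have hclosed : IsClosed {x | f (g x) = f (g (w 0))} := isClosed_eq hfg continuous_const
    refine fun x hx => ⟨mem_range_self x, closure_minimal ?_ hclosed hx⟩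
    exact range_subset_iff.2 fun k => mem_iInter.1 hwz k

end MazurkiewiczSierpinski

section AcyclicGraphs

variable {X : Type*} {Γ : SimpleGraph X} {x y : X}

theorem exists_walk_getVert_eq_of_seq : ∀ (m : ℕ) (p : ℕ → X),
    (∀ i < m, Γ.Adj (p i) (p (i + 1))) →
    ∃ q : Γ.Walk (p 0) (p m), q.length = m ∧ ∀ i ≤ m, q.getVert i = p i
  | 0, _, _ => ⟨.nil, rfl, fun i hi => by rw [Nat.le_zero.1 hi, SimpleGraph.Walk.getVert_zero]⟩
  | m + 1, p, hp => by
    obtain ⟨q, hlength, hq⟩ := exists_walk_getVert_eq_of_seq m (fun i => p (i + 1))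
      fun i hi => hp (i + 1) (Nat.succ_lt_succ hi)
    refine ⟨.cons (hp 0 m.succ_pos) q, congrArg Nat.succ hlength, ?_⟩
    rintro (_ | i) hi
    · rw [SimpleGraph.Walk.getVert_zero]
    · rw [SimpleGraph.Walk.getVert_cons_succ, hq i (Nat.le_of_succ_le_succ hi)]

theorem edist_le_iff_exists_seq {n : ℕ} : Γ.edist x y ≤ n ↔
    ∃ m ≤ n, ∃ p : ℕ → X, p 0 = x ∧ p m = y ∧ ∀ i < m, Γ.Adj (p i) (p (i + 1)) := by
  constructor
  · intro h
    obtain ⟨q, hq⟩ :=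
      SimpleGraph.exists_walk_of_edist_ne_top (h.trans_lt (ENat.natCast_lt_top n)).ne
    rw [← hq, Nat.cast_le] at h
    exact ⟨q.length, h, q.getVert, q.getVert_zero, q.getVert_length,
      fun i hi => q.adj_getVert_succ hi⟩
  · rintro ⟨m, hm, p, rfl, rfl, hp⟩
    obtain ⟨q, hlength, -⟩ := exists_walk_getVert_eq_of_seq m p hp
    exact (SimpleGraph.edist_le q).trans (Nat.cast_le.2 (hlength.trans_le hm))

theorem edist_eq_length_of_isPath (hΓ : Γ.IsAcyclic) {q : Γ.Walk x y} (hq : q.IsPath) :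
    Γ.edist x y = q.length := by
  obtain ⟨r, hr, hdist⟩ := q.reachable.exists_path_of_dist
  have hrq : r = q :=
    congrArg Subtype.val ((hΓ.subsingleton_path x y).elim ⟨r, hr⟩ ⟨q, hq⟩)
  rw [← q.reachable.coe_dist_eq_edist, ← hdist, hrq]

theorem edist_eq_iff_exists_injOn_seq (hΓ : Γ.IsAcyclic) {m : ℕ} : Γ.edist x y = m ↔
    ∃ p : ℕ → X, ((∀ i < m, Γ.Adj (p i) (p (i + 1))) ∧ InjOn p (Iic m)) ∧ p 0 = x ∧ p m = y := by
  constructor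
  · intro h
    obtain ⟨q, hq⟩ := (SimpleGraph.edist_ne_top_iff_reachable.1
      (h.trans_ne (ENat.natCast_ne_top m))).exists_isPath
    obtain rfl : q.length = m := Nat.cast_inj.1 ((edist_eq_length_of_isPath hΓ hq).symm.trans h)
    exact ⟨q.getVert, ⟨fun i hi => q.adj_getVert_succ hi, hq.getVert_injOn⟩, q.getVert_zero,
      q.getVert_length⟩
  · rintro ⟨p, ⟨hp, hinj⟩, rfl, rfl⟩
    obtain ⟨q, hlength, hq⟩ := exists_walk_getVert_eq_of_seq m p hp
    have hpath : q.IsPath := by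
      rw [← SimpleGraph.Walk.IsPath.getVert_injOn_iff, hlength]
      exact hinj.congr fun i hi => (hq i hi).symm
    rw [edist_eq_length_of_isPath hΓ hpath, hlength]

theorem isAcyclic_of_not_exists_cyclic_seq (hΓ : ¬ ∃ (n : ℕ) (p : ℕ → X), 3 ≤ n ∧
    (∀ i < n, ∀ j < n, p i = p j → i = j) ∧ (∀ i < n, Γ.Adj (p i) (p (i + 1))) ∧ p 0 = p n) :
    Γ.IsAcyclic := fun _ c hc =>
  hΓ ⟨c.length, c.getVert, hc.three_le_length,
    fun _ hi _ hj => hc.getVert_injOn' (Nat.le_sub_one_of_lt hi) (Nat.le_sub_one_of_lt hj),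
    fun _ hi => c.adj_getVert_succ hi, by rw [c.getVert_zero, c.getVert_length]⟩

theorem isPath_reverse_append_of_ne (hΓ : Γ.IsAcyclic) {z z' s c : X} {h : Γ.Adj y z}
    {h' : Γ.Adj y z'} {q : Γ.Walk z c} {r : Γ.Walk z' s}
    (hq : (SimpleGraph.Walk.cons h q).IsPath) (hr : (SimpleGraph.Walk.cons h' r).IsPath)
    (hne : z' ≠ z) :
    ((SimpleGraph.Walk.cons h' r).reverse.append (SimpleGraph.Walk.cons h q)).IsPath := by
  rw [hΓ.isPath_iff_isChain, SimpleGraph.Walk.edges_append, List.isChain_append]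
  refine ⟨(hΓ.isPath_iff_isChain _).1 hr.reverse, (hΓ.isPath_iff_isChain _).1 hq, ?_⟩
  intro a ha b hb hab
  simp only [SimpleGraph.Walk.edges_reverse, SimpleGraph.Walk.edges_cons, List.getLast?_reverse,
    List.head?_cons, Option.mem_def, Option.some.injEq] at ha hb
  rw [← ha, ← hb, Sym2.congr_right] at hab
  exact hne hab

/-- The witness is the neighbor of `y` in the direction of `c`: a point `s` lies either behind that
neighbor, or on a branch at `y` from which every path to `c` leads through `y`. -/
theorem exists_forall_edist_lt_or_eq_add (hΓ : Γ.IsAcyclic) (y c : X) :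
    ∃ z, ∀ s, Γ.edist z s < Γ.edist y s ∨ Γ.edist s c = Γ.edist s y + Γ.edist y c := by
  by_cases hyc : Γ.Reachable y c
  swap
  · refine ⟨c, fun s => ?_⟩
    have htop := SimpleGraph.edist_eq_top_of_not_reachable hyc
    by_cases hcs : Γ.Reachable c s
    · rw [SimpleGraph.edist_eq_top_of_not_reachable fun hys => hyc (hys.trans hcs.symm)]
      exact .inl (lt_top_iff_ne_top.2 (SimpleGraph.edist_ne_top_iff_reachable.2 hcs))
    · rw [htop, add_top, SimpleGraph.edist_eq_top_of_not_reachable fun hsc => hcs hsc.symm]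
      exact .inr rfl
  obtain ⟨q, hq⟩ := hyc.exists_isPath
  cases q with
  | nil => exact ⟨y, fun s => .inr (by rw [SimpleGraph.edist_self, add_zero])⟩
  | @cons _ z _ h q =>
    refine ⟨z, fun s => ?_⟩
    by_cases hys : Γ.Reachable y s
    swap
    · rw [SimpleGraph.edist_eq_top_of_not_reachable fun hsy => hys hsy.symm, top_add,
        SimpleGraph.edist_eq_top_of_not_reachable fun hsc => hys (hyc.trans hsc.symm)]
      exact .inr rfl
    obtain ⟨r, hr⟩ := hys.exists_isPath
    cases r with
    | nil => exact .inr (by rw [SimpleGraph.edist_self, zero_add])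
    | @cons _ z' _ h' r =>
      by_cases hz : z' = z
      · subst hz
        rw [edist_eq_length_of_isPath hΓ hr]
        exact .inl ((SimpleGraph.edist_le r).trans_lt (Nat.cast_lt.2 r.length.lt_succ_self))
      · right
        rw [edist_eq_length_of_isPath hΓ (isPath_reverse_append_of_ne hΓ hq hr hz),
          edist_eq_length_of_isPath hΓ hr.reverse, edist_eq_length_of_isPath hΓ hq,
          SimpleGraph.Walk.length_append, Nat.cast_add]

theorem exists_edist_le_of_not_countable (hΓ : Γ.IsAcyclic) {A C : Set X} {j k : ℕ}
    (hball : ∀ y, {s ∈ A | Γ.edist y s ≤ j}.Countable) (hC : C.Countable)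
    (hAC : ∀ s ∈ A, Γ.Reachable y s → ∃ c ∈ C, Γ.edist s c ≤ (j + 1 + k : ℕ))
    (hy : ¬ {s ∈ A | Γ.edist y s ≤ (j + 1 : ℕ)}.Countable) : ∃ c ∈ C, Γ.edist y c ≤ k := by
  by_contra! hfar
  choose z hz using exists_forall_edist_lt_or_eq_add hΓ y
  refine hy (((hball y).union (hC.biUnion fun c _ => hball (z c))).mono ?_)
  rintro s ⟨hsA, hys⟩
  have hreach : Γ.Reachable y s :=
    SimpleGraph.reachable_of_edist_ne_top (hys.trans_lt (ENat.natCast_lt_top _)).ne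
  obtain ⟨c, hc, hsc⟩ := hAC s hsA hreach
  rw [← hreach.coe_dist_eq_edist, Nat.cast_le] at hys
  obtain hzs | hsplit := hz c s
  · refine .inr (mem_biUnion hc ⟨hsA, ?_⟩)
    rw [← hreach.coe_dist_eq_edist] at hzs
    exact ENat.lt_natCast_add_one_iff.1 (hzs.trans_le (by exact_mod_cast hys))
  · refine .inl ⟨hsA, ?_⟩
    rw [← hreach.coe_dist_eq_edist, Nat.cast_le]
    by_contra hjs
    have heq : Γ.dist y s = j + 1 := by omega
    rw [hsplit, Nat.cast_add (j + 1), SimpleGraph.edist_comm, ← hreach.coe_dist_eq_edist,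
      heq] at hsc
    exact (ENat.add_le_add_iff_left (ENat.natCast_ne_top _)).1 hsc |>.not_gt (hfar c hc)

theorem countable_edist_le_zero (A : Set X) (y : X) :
    {s ∈ A | Γ.edist y s ≤ (0 : ℕ)}.Countable := by
  refine (countable_singleton y).mono ?_
  rintro s ⟨-, hys⟩
  rw [Nat.cast_zero, nonpos_iff_eq_zero, SimpleGraph.edist_eq_zero_iff] at hys
  exact hys.symm

theorem countable_edist_le_sdiff {A B : Set X} {r k : ℕ}
    (hB : ∀ y, ¬ {s ∈ A | Γ.edist y s ≤ r}.Countable → ∃ b ∈ B, Γ.edist y b ≤ k) (y : X) :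
    {s ∈ A \ {x | ∃ b ∈ B, Γ.edist x b ≤ (r + k : ℕ)} | Γ.edist y s ≤ r}.Countable := by
  by_cases hy : {s ∈ A | Γ.edist y s ≤ r}.Countable
  · refine hy.mono ?_
    rintro s ⟨⟨hsA, -⟩, hys⟩
    exact ⟨hsA, hys⟩
  · obtain ⟨b, hb, hyb⟩ := hB y hy
    refine countable_empty.mono ?_
    rintro s ⟨⟨-, hsB⟩, hys⟩
    refine hsB ⟨b, hb, ?_⟩
    rw [Nat.cast_add]
    exact SimpleGraph.edist_triangle.trans (add_le_add (SimpleGraph.edist_comm.trans_le hys) hyb)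

end AcyclicGraphs

section BorelGraphs

variable {X : Type*} [TopologicalSpace X] [PolishSpace X] [MeasurableSpace X] [BorelSpace X]
  {Γ : SimpleGraph X}

theorem measurableSet_setOf_adj_injOn_seq (hAdj : MeasurableSet {p : X × X | Γ.Adj p.1 p.2})
    (m : ℕ) :
    MeasurableSet {p : ℕ → X | (∀ i < m, Γ.Adj (p i) (p (i + 1))) ∧ InjOn p (Iic m)} := by
  have heval : ∀ i, Measurable fun p : ℕ → X => p i := measurable_pi_apply
  refine measurableSet_setOfPred.2 (.and (.forall fun i => .forall fun _ => ?_) ?_)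
  · exact measurableSet_setOfPred.1 (((heval i).prodMk (heval (i + 1))) hAdj)
  · refine .forall fun i => .forall fun _ => .forall fun j => .forall fun _ => .imp ?_ ?_
    · exact measurableSet_setOfPred.1 (measurableSet_eq_fun (heval i) (heval j))
    · exact measurable_const

theorem measurable_simpleGraph_edist (hΓ : Γ.IsAcyclic)
    (hAdj : MeasurableSet {p : X × X | Γ.Adj p.1 p.2})
    (hReach : MeasurableSet {p : X × X | Γ.Reachable p.1 p.2}) :
    Measurable fun p : X × X => Γ.edist p.1 p.2 := by
  refine measurable_of_analyticSet_preimage_singleton fun d => ?_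
  induction d using ENat.recTopCoe with
  | top =>
    convert hReach.compl.analyticSet using 1
    ext p
    exact not_ne_iff.symm.trans SimpleGraph.edist_ne_top_iff_reachable.not
  | coe m =>
    convert (measurableSet_setOf_adj_injOn_seq hAdj m).analyticSet.image_of_continuous
      (f := fun p : ℕ → X => (p 0, p m)) (by fun_prop) using 1
    ext ⟨x, y⟩
    simp only [mem_preimage, mem_singleton_iff, edist_eq_iff_exists_injOn_seq hΓ, mem_image,
      mem_ofPred_eq, Prod.mk.injEq]

theorem measurableSet_setOf_exists_edist_le {B : Set X} (hB : MeasurableSet B)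
    (hcount : ∀ x, {y ∈ B | Γ.Reachable x y}.Countable)
    (hedist : Measurable fun p : X × X => Γ.edist p.1 p.2) (r : ℕ) :
    MeasurableSet {x | ∃ b ∈ B, Γ.edist x b ≤ r} := by
  have hclose : MeasurableSet {p : X × X | p.2 ∈ B ∧ Γ.edist p.1 p.2 ≤ r} :=
    (measurable_snd hB).inter (hedist (.of_discrete (s := Iic (r : ℕ∞))))
  have hsections : ∀ x, {b | b ∈ B ∧ Γ.edist x b ≤ r}.Countable := fun x => (hcount x).mono <| by
    rintro b ⟨hb, hxb⟩
    exact ⟨hb, SimpleGraph.reachable_of_edist_ne_top (hxb.trans_lt (ENat.natCast_lt_top r)).ne⟩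
  convert measurableSet_image_of_countable_inter_fiber continuous_fst hclose fun x =>
    countable_inter_fst_fiber_iff.2 (hsections x) using 1
  ext x
  simp

theorem analyticSet_setOf_not_countable_edist_le {A : Set X} (hA : AnalyticSet A)
    (hedist : Measurable fun p : X × X => Γ.edist p.1 p.2) (r : ℕ) :
    AnalyticSet {y | ¬ {s ∈ A | Γ.edist y s ≤ r}.Countable} := by
  have hclose : AnalyticSet {p : X × X | p.2 ∈ A ∧ Γ.edist p.1 p.2 ≤ r} :=
    analyticSet_inter (analyticSet_preimage hA continuous_snd)
      (hedist (.of_discrete (s := Iic (r : ℕ∞)))).analyticSet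
  simpa only [countable_inter_fst_fiber_iff, mem_ofPred_eq] using
    analyticSet_setOf_not_countable_inter_fiber continuous_fst hclose

theorem exists_measurableSet_superset_countable_classes
    (hReach : MeasurableSet {p : X × X | Γ.Reachable p.1 p.2}) {A : Set X} (hA : AnalyticSet A)
    {j : ℕ} (hball : ∀ y, {s ∈ A | Γ.edist y s ≤ j}.Countable)
    (hcover : ∀ x, ∃ C : Set X, C.Countable ∧
      ∀ s ∈ A, Γ.Reachable x s → ∃ c ∈ C, Γ.edist s c ≤ j) :
    ∃ B, MeasurableSet B ∧ A ⊆ B ∧ ∀ x, {y ∈ B | Γ.Reachable x y}.Countable := by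
  refine exists_measurableSet_superset_countable_sections hReach hA fun x => ?_
  obtain ⟨C, hC, hAC⟩ := hcover x
  refine (hC.biUnion fun c _ => hball c).mono ?_
  rintro s ⟨hs, hxs⟩
  obtain ⟨c, hc, hsc⟩ := hAC s hs hxs
  exact mem_biUnion hc ⟨hs, SimpleGraph.edist_comm.trans_le hsc⟩

theorem exists_measurableSet_countable_classes_of_edist_le (hΓ : Γ.IsAcyclic)
    (hAdj : MeasurableSet {p : X × X | Γ.Adj p.1 p.2})
    (hReach : MeasurableSet {p : X × X | Γ.Reachable p.1 p.2}) {A : Set X} (hA : AnalyticSet A)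
    {j k n : ℕ} (hn : j + k = n) (hball : ∀ y, {s ∈ A | Γ.edist y s ≤ j}.Countable)
    (hcover : ∀ x, ∃ C : Set X, C.Countable ∧
      ∀ s ∈ A, Γ.Reachable x s → ∃ c ∈ C, Γ.edist s c ≤ n) :
    ∃ B, MeasurableSet B ∧ (∀ s ∈ A, ∃ b ∈ B, Γ.edist s b ≤ n) ∧
      ∀ x, {y ∈ B | Γ.Reachable x y}.Countable := by
  have hedist := measurable_simpleGraph_edist hΓ hAdj hReach
  induction k generalizing A j n with
  | zero =>
    subst hn
    obtain ⟨B, hB, hAB, hcount⟩ :=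
      exists_measurableSet_superset_countable_classes hReach hA hball hcover
    exact ⟨B, hB, fun s hs => ⟨s, hAB hs, SimpleGraph.edist_self.trans_le zero_le⟩, hcount⟩
  | succ k ih =>
    obtain rfl : j + 1 + k = n := by omega
    have hU := analyticSet_setOf_not_countable_edist_le hA hedist (j + 1)
    obtain ⟨B₁, hB₁, hUB₁, hcount₁⟩ := ih hU (zero_add k) (countable_edist_le_zero _) fun x => by
      obtain ⟨C, hC, hAC⟩ := hcover x
      exact ⟨C, hC, fun y hy hxy => exists_edist_le_of_not_countable hΓ hball hC
        (fun s hs hys => hAC s hs (hxy.trans hys)) hy⟩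
    have hV := measurableSet_setOf_exists_edist_le hB₁ hcount₁ hedist (j + 1 + k)
    obtain ⟨B₂, hB₂, hAB₂, hcount₂⟩ := ih (analyticSet_inter hA hV.compl.analyticSet) rfl
      (countable_edist_le_sdiff hUB₁) fun x => by
        obtain ⟨C, hC, hAC⟩ := hcover x
        exact ⟨C, hC, fun s hs => hAC s hs.1⟩
    refine ⟨B₁ ∪ B₂, hB₁.union hB₂, fun s hs => ?_, fun x => ?_⟩
    · by_cases hsB₁ : ∃ b ∈ B₁, Γ.edist s b ≤ (j + 1 + k : ℕ)
      · exact hsB₁.imp fun b hb => ⟨.inl hb.1, hb.2⟩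
      · exact (hAB₂ s ⟨hs, hsB₁⟩).imp fun b hb => ⟨.inr hb.1, hb.2⟩
    · exact ((hcount₁ x).union (hcount₂ x)).mono sep_union.subset

end BorelGraphs

/-- Let `G` be an acyclic Borel graph whose connected components are
the classes of a Borel equivalence relation `E`, `A` analytic, and suppose every
`x ∈ A` admits a countable subset of its `E`-class which is complete with respect to
`G`-paths of length at most `n` from points of `A ∩ [x]_E`. Then there is a Borel set
`B` such that every point of `A` is joined by a `G`-path of length at most `n` to a
point of `B`, and `E` restricted to `B` has countable classes. -/
theorem statement17 {X : Type*} [TopologicalSpace X] [PolishSpace X]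
    [MeasurableSpace X] [BorelSpace X]
    (A : Set X) (hA : MeasureTheory.AnalyticSet A)
    (E : X → X → Prop) (hE : Equivalence E)
    (hEBorel : MeasurableSet {p : X × X | E p.1 p.2})
    (G : X → X → Prop) (hGirr : ∀ x, ¬ G x x) (hGsym : ∀ x y, G x y → G y x)
    (hGBorel : MeasurableSet {p : X × X | G p.1 p.2})
    (hGacyclic : ¬ ∃ (n : ℕ) (p : ℕ → X), 3 ≤ n ∧
      (∀ i < n, ∀ j < n, p i = p j → i = j) ∧
      (∀ i < n, G (p i) (p (i + 1))) ∧ p 0 = p n)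
    (hcomp : ∀ a b : X, E a b ↔ Relation.ReflTransGen G a b)
    (n : ℕ)
    (hcomplete : ∀ x ∈ A, ∃ C : Set X, C.Countable ∧ (∀ c ∈ C, E x c) ∧
      ∀ y ∈ A, E x y → ∃ c ∈ C, ∃ m ≤ n, ∃ p : ℕ → X, p 0 = y ∧ p m = c ∧
        ∀ i < m, G (p i) (p (i + 1))) :
    ∃ B : Set X, MeasurableSet B ∧
      (∀ x ∈ A, ∃ b ∈ B, ∃ m ≤ n, ∃ p : ℕ → X, p 0 = x ∧ p m = b ∧
        ∀ i < m, G (p i) (p (i + 1))) ∧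
      ∀ x ∈ B, {y ∈ B | E x y}.Countable := by
  let Γ : SimpleGraph X := ⟨G, ⟨hGsym⟩, ⟨hGirr⟩⟩
  have hΓ : Γ.IsAcyclic := isAcyclic_of_not_exists_cyclic_seq hGacyclic
  have hreach : ∀ x y, E x y ↔ Γ.Reachable x y := fun x y =>
    (hcomp x y).trans (Γ.reachable_iff_reflTransGen x y).symm
  have hcover : ∀ x, ∃ C : Set X, C.Countable ∧
      ∀ y ∈ A, Γ.Reachable x y → ∃ c ∈ C, Γ.edist y c ≤ n := fun x => by
    simp only [← hreach, edist_le_iff_exists_seq]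
    by_cases hx : ∃ a ∈ A, E x a
    · obtain ⟨a, ha, hxa⟩ := hx
      obtain ⟨C, hC, -, hAC⟩ := hcomplete a ha
      exact ⟨C, hC, fun y hy hxy => hAC y hy (hE.trans (hE.symm hxa) hxy)⟩
    · exact ⟨∅, countable_empty, fun y hy hxy => (hx ⟨y, hy, hxy⟩).elim⟩
  simp only [hreach] at hEBorel ⊢
  obtain ⟨B, hB, hAB, hcount⟩ := exists_measurableSet_countable_classes_of_edist_le hΓ hGBorel
    hEBorel hA (zero_add n) (countable_edist_le_zero A) hcover
  exact ⟨B, hB, fun x hx => (hAB x hx).imp fun b hb => hb.imp_right edist_le_iff_exists_seq.1,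
    fun x _ => hcount x⟩
end
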